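/- Let γ > 0 and let μ̄ be a probability distribution on 𝔛; assume r̄(0) and θ(0) both have distribution μ̄. The following three statements are equivalent: (i) Σ_K is mean square stable and ‖Σ_K‖₂² < γ; (ii) Σ̄_K is mean square stable and ‖Σ̄_K‖₂² < γ, where the H₂ norm of Σ̄_K is defined analogously with θ in place of r̄; (iii) there exist symmetric positive definite matrices Q_χ ∈ ℝ^{n×n} for every χ ∈ 𝔛 such that Σ_{χ∈𝔛} tr(C_{K,χ} Q_χ C_{K,χ}ᵀ) < γ and Q_χ − D̄_χ(A_K Q A_Kᵀ + μ̄ E_K E_Kᵀ) is positive definite for every χ ∈ 𝔛, where (A_K Q A_Kᵀ)_χ = A_{K,χ} Q_χ A_{K,χ}ᵀ and (μ̄ E_K E_Kᵀ)_χ = μ̄(χ) E_{K,χ} E_{K,χ}ᵀ. -/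

import Mathlib

open MeasureTheory ProbabilityTheory Matrix

noncomputable section

/-- The state space `[N] × [M] × [N] × [T]` of the extended process `r̄`.
`Fin N`, `Fin M`, `Fin T` play the roles of `[N] = {1,…,N}`, `[M]`, `[T]`
(with `Fin T` being the 0-indexed version of `[T] = {1,…,T}`, i.e. `δ ∈ [T]`
corresponds to `δ - 1 : Fin T`). -/
abbrev XT (NN MM T : ℕ) : Type := Fin NN × Fin MM × Fin NN × Fin T

/-- `X` is a time-homogeneous Markov chain with transition probability matrix `P`:
for every `k`, every state `j` and every sequence of states `i`,
`Pr(X(k+1) = j ∧ X(l) = i l for all l ≤ k) = P (i k) j * Pr(X(l) = i l for all l ≤ k)`. -/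
def IsMarkovChain {Ω : Type} {_mΩ : MeasurableSpace Ω} (μ : Measure Ω) {S : Type}
    (X : ℕ → Ω → S) (P : S → S → ℝ) : Prop :=
  ∀ (k : ℕ) (j : S) (i : ℕ → S),
    (μ {ω | X (k + 1) ω = j ∧ ∀ l ≤ k, X l ω = i l}).toReal
      = P (i k) j * (μ {ω | ∀ l ≤ k, X l ω = i l}).toReal

/-- `⌊m⌋_T`, the unique element of `{0,…,T-1}` congruent to `m` modulo `T`, as `Fin T`. -/
def intToFin (T : ℕ) [NeZero T] (a : ℤ) : Fin T :=
  ⟨(a % (T : ℤ)).toNat, by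
    have hT : 0 < (T : ℤ) := by
      exact_mod_cast Nat.pos_of_ne_zero (NeZero.ne T)
    have h1 : 0 ≤ a % (T : ℤ) := Int.emod_nonneg a (by omega)
    have h2 : a % (T : ℤ) < (T : ℤ) := Int.emod_lt_of_pos a hT
    omega⟩

-- `τ(k)`: the most recent observation time `≤ k` (i.e. the largest `j ≤ k` with
-- `f(s(j)) = 1`), or `τ₀` if no observation has occurred up to time `k` (`k < t₀`).
open Classical in
def tauZ {Ω : Type} {MM : ℕ} (s : ℕ → Ω → Fin MM) (f : Fin MM → Bool)
    (τ₀ : ℤ) (k : ℕ) (ω : Ω) : ℤ :=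
  if ∃ j ≤ k, f (s j ω) = true
  then ((Nat.findGreatest (fun j => f (s j ω) = true) k : ℕ) : ℤ)
  else τ₀

-- `σ(k) = r(τ(k))` if an observation occurred by time `k` (i.e. `k ≥ t₀`), else `σ₀`.
open Classical in
def sigmaProc {Ω : Type} {NN MM : ℕ} (r : ℕ → Ω → Fin NN) (s : ℕ → Ω → Fin MM)
    (f : Fin MM → Bool) (σ₀ : Fin NN) (k : ℕ) (ω : Ω) : Fin NN :=
  if ∃ j ≤ k, f (s j ω) = true
  then r (Nat.findGreatest (fun j => f (s j ω) = true) k) ω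
  else σ₀

/-- `ρ(k) = ⌊k - τ(k)⌋_T + 1 ∈ [T]`, represented 0-indexed as `⌊k - τ(k)⌋_T : Fin T`. -/
def rhoProc {Ω : Type} {MM T : ℕ} [NeZero T] (s : ℕ → Ω → Fin MM) (f : Fin MM → Bool)
    (τ₀ : ℤ) (k : ℕ) (ω : Ω) : Fin T :=
  intToFin T ((k : ℤ) - tauZ s f τ₀ k ω)

/-- The extended process `r̄(k) = (r(k), s(k), σ(k), ρ(k))`. -/
def rbarProc {Ω : Type} {NN MM T : ℕ} [NeZero T] (r : ℕ → Ω → Fin NN)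
    (s : ℕ → Ω → Fin MM) (f : Fin MM → Bool) (τ₀ : ℤ) (σ₀ : Fin NN)
    (k : ℕ) (ω : Ω) : XT NN MM T :=
  (r k ω, s k ω, sigmaProc r s f σ₀ k ω, rhoProc s f τ₀ k ω)

/-- Membership in `𝔛`: if `f(β) = 1` then `α = γ` and `δ = 1` (0-indexed: `δ = 0`). -/
def inX {NN MM T : ℕ} [NeZero T] (f : Fin MM → Bool) (χ : XT NN MM T) : Prop :=
  f χ.2.1 = true → χ.1 = χ.2.2.1 ∧ χ.2.2.2 = 0

/-- The transition probabilities `p̄_{χχ'}` of the extended chain. The condition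
`⌊δ' - δ - 1⌋_T = 0` for `δ, δ' ∈ [T]` is, in 0-indexed form, `δ' = δ + 1` in `Fin T`. -/
def pbar {NN MM T : ℕ} [NeZero T] (P : Matrix (Fin NN) (Fin NN) ℝ)
    (Q : Matrix (Fin MM) (Fin MM) ℝ) (f : Fin MM → Bool) (χ χ' : XT NN MM T) : ℝ :=
  (if f χ'.2.1 = true
    then (if χ'.1 = χ'.2.2.1 ∧ χ'.2.2.2 = 0 then (1 : ℝ) else 0)
    else (if χ'.2.2.1 = χ.2.2.1 ∧ χ'.2.2.2 = χ.2.2.2 + 1 then (1 : ℝ) else 0))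
  * P χ.1 χ'.1 * Q χ.2.1 χ'.2.1

/-- The state trajectory of the closed-loop system
`x(k+1) = A(mode(k)) x(k) + E(mode(k)) w(k)`, `x(0) = x₀`. -/
def traj {Ω S : Type} {n q : ℕ}
    (Amat : S → Matrix (Fin n) (Fin n) ℝ) (Emat : S → Matrix (Fin n) (Fin q) ℝ)
    (mode : ℕ → Ω → S) (w : ℕ → Ω → Fin q → ℝ) (x0 : Fin n → ℝ) : ℕ → Ω → Fin n → ℝ
  | 0, _ => x0
  | (k + 1), ω =>
      (Amat (mode k ω)).mulVec (traj Amat Emat mode w x0 k ω)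
        + (Emat (mode k ω)).mulVec (w k ω)

/-- `A_{K,χ} = A_α + B_α K_{γ,δ}`. -/
def AKmat {NN MM T n m : ℕ} (A : Fin NN → Matrix (Fin n) (Fin n) ℝ)
    (B : Fin NN → Matrix (Fin n) (Fin m) ℝ)
    (K : Fin NN → Fin T → Matrix (Fin m) (Fin n) ℝ) (χ : XT NN MM T) :
    Matrix (Fin n) (Fin n) ℝ :=
  A χ.1 + B χ.1 * K χ.2.2.1 χ.2.2.2

/-- `C_{K,χ} = C_α + D_α K_{γ,δ}`. -/
def CKmat {NN MM T n m ℓ : ℕ} (C : Fin NN → Matrix (Fin ℓ) (Fin n) ℝ)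
    (D : Fin NN → Matrix (Fin ℓ) (Fin m) ℝ)
    (K : Fin NN → Fin T → Matrix (Fin m) (Fin n) ℝ) (χ : XT NN MM T) :
    Matrix (Fin ℓ) (Fin n) ℝ :=
  C χ.1 + D χ.1 * K χ.2.2.1 χ.2.2.2

/-- Squared Euclidean norm of a vector, as an extended nonnegative real. -/
def sqE {d : ℕ} (v : Fin d → ℝ) : ENNReal := ENNReal.ofReal (∑ i, (v i) ^ 2)

-- The operator `D̄_χ(R) = ∑_{χ' ∈ 𝔛} p̄_{χ'χ} R_{χ'}`.
open Classical in
def Dop {NN MM T n : ℕ} [NeZero T] (P : Matrix (Fin NN) (Fin NN) ℝ)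
    (Q : Matrix (Fin MM) (Fin MM) ℝ) (f : Fin MM → Bool)
    (R : XT NN MM T → Matrix (Fin n) (Fin n) ℝ) (χ : XT NN MM T) :
    Matrix (Fin n) (Fin n) ℝ :=
  ∑ χ' : XT NN MM T, if inX f χ' then pbar P Q f χ' χ • R χ' else 0

-- The operator `F̄_χ(Z) = ∑_{χ' ∈ 𝔛} p̄_{χχ'} Z_{χ,χ'}`.
open Classical in
def Fop {NN MM T n : ℕ} [NeZero T] (P : Matrix (Fin NN) (Fin NN) ℝ)
    (Q : Matrix (Fin MM) (Fin MM) ℝ) (f : Fin MM → Bool)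
    (Z : XT NN MM T → XT NN MM T → Matrix (Fin n) (Fin n) ℝ) (χ : XT NN MM T) :
    Matrix (Fin n) (Fin n) ℝ :=
  ∑ χ' : XT NN MM T, if inX f χ' then pbar P Q f χ χ' • Z χ χ' else 0

/-- A pair `(γ,δ) ∈ [N] × [T]` is admissible if `(α,β,γ,δ) ∈ 𝔛` for some `α, β`. -/
def Admissible {NN MM T : ℕ} [NeZero T] (f : Fin MM → Bool) (g : Fin NN) (d : Fin T) : Prop :=
  ∃ (α : Fin NN) (β : Fin MM), inX (T := T) f (α, β, g, d)

/-- A realization, on some probability space, of the pair of independent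
time-homogeneous Markov chains `(r, s)` with transition matrices `P` and `Q`. -/
structure MJLSReal (NN MM : ℕ) (P : Matrix (Fin NN) (Fin NN) ℝ)
    (Q : Matrix (Fin MM) (Fin MM) ℝ) : Type 1 where
  Ω : Type
  inst : MeasurableSpace Ω
  μ : @Measure Ω inst
  prob : IsProbabilityMeasure μ
  r : ℕ → Ω → Fin NN
  s : ℕ → Ω → Fin MM
  meas_r : ∀ k, Measurable[inst] (r k)
  meas_s : ∀ k, Measurable[inst] (s k)
  markov_r : IsMarkovChain μ r fun i j => P i j
  markov_s : IsMarkovChain μ s fun i j => Q i j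
  indep : IndepFun (fun ω l => r l ω) (fun ω l => s l ω) μ

/-- A realization, on some probability space, of a time-homogeneous Markov chain `θ`
taking values in `𝔛` with transition probabilities `p̄`. -/
structure ThetaReal (NN MM T : ℕ) [NeZero T] (P : Matrix (Fin NN) (Fin NN) ℝ)
    (Q : Matrix (Fin MM) (Fin MM) ℝ) (f : Fin MM → Bool) : Type 1 where
  Ω : Type
  inst : MeasurableSpace Ω
  μ : @Measure Ω inst
  prob : IsProbabilityMeasure μ
  θ : ℕ → Ω → XT NN MM T
  meas : ∀ k, Measurable[inst] (θ k)
  mem : ∀ k ω, inX f (θ k ω)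
  markov : IsMarkovChain μ θ (pbar P Q f)

/-- Mean square stability of the closed-loop system `Σ_K`: there are `c > 0` and
`λ ∈ [0,1)` such that for every realization, every deterministic initialization
(`r(0) = r₀`, `s(0) = s₀` a.s., together with `σ₀` and `τ₀ ≤ 0`, so that `r̄(0)`
is a deterministic element of `𝔛`), every `x₀` and every `k`,
`E[‖x(k)‖²] ≤ c λ^k ‖x₀‖²` (with `w ≡ 0`). -/
def MeanSquareStable {NN MM T n m q : ℕ} [NeZero T]
    (P : Matrix (Fin NN) (Fin NN) ℝ) (Qm : Matrix (Fin MM) (Fin MM) ℝ) (f : Fin MM → Bool)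
    (A : Fin NN → Matrix (Fin n) (Fin n) ℝ) (B : Fin NN → Matrix (Fin n) (Fin m) ℝ)
    (E : Fin NN → Matrix (Fin n) (Fin q) ℝ)
    (K : Fin NN → Fin T → Matrix (Fin m) (Fin n) ℝ) : Prop :=
  ∃ c : ℝ, 0 < c ∧ ∃ lam : ℝ, 0 ≤ lam ∧ lam < 1 ∧
    ∀ (S : MJLSReal NN MM P Qm) (τ₀ : ℤ), τ₀ ≤ 0 →
      ∀ (σ₀ r₀ : Fin NN) (s₀ : Fin MM),
        (∀ᵐ ω ∂S.μ, S.r 0 ω = r₀ ∧ S.s 0 ω = s₀) →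
        ∀ (x0 : Fin n → ℝ) (k : ℕ),
          (∫⁻ ω, sqE (traj (AKmat A B K) (fun χ => E χ.1)
              (rbarProc S.r S.s f τ₀ σ₀) (fun _ _ => 0) x0 k ω) ∂S.μ)
            ≤ ENNReal.ofReal (c * lam ^ k * ∑ i, (x0 i) ^ 2)

/-- Mean square stability of `Σ̄_K` (the system driven by the chain `θ`). -/
def MeanSquareStableBar {NN MM T n m q : ℕ} [NeZero T]
    (P : Matrix (Fin NN) (Fin NN) ℝ) (Qm : Matrix (Fin MM) (Fin MM) ℝ) (f : Fin MM → Bool)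
    (A : Fin NN → Matrix (Fin n) (Fin n) ℝ) (B : Fin NN → Matrix (Fin n) (Fin m) ℝ)
    (E : Fin NN → Matrix (Fin n) (Fin q) ℝ)
    (K : Fin NN → Fin T → Matrix (Fin m) (Fin n) ℝ) : Prop :=
  ∃ c : ℝ, 0 < c ∧ ∃ lam : ℝ, 0 ≤ lam ∧ lam < 1 ∧
    ∀ (S : ThetaReal NN MM T P Qm f) (χ : XT NN MM T), inX f χ →
      (∀ᵐ ω ∂S.μ, S.θ 0 ω = χ) →
      ∀ (x0 : Fin n → ℝ) (k : ℕ),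
        (∫⁻ ω, sqE (traj (AKmat A B K) (fun χ' => E χ'.1) S.θ (fun _ _ => 0) x0 k ω) ∂S.μ)
          ≤ ENNReal.ofReal (c * lam ^ k * ∑ i, (x0 i) ^ 2)

/-- The impulse disturbance `w = e_i φ`, i.e. `w(0) = e_i` and `w(k) = 0` for `k ≥ 1`. -/
def impulse {Ω : Type} (q : ℕ) (i : Fin q) : ℕ → Ω → Fin q → ℝ :=
  fun k _ j => if k = 0 ∧ j = i then 1 else 0

/-- `∑_k E[‖z(k; 0, χ, e_i φ)‖²]` for `Σ_K` on a given realization with data `(τ₀, σ₀)`. -/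
def H2TermSigma {NN MM T n m q ℓ : ℕ} [NeZero T]
    {P : Matrix (Fin NN) (Fin NN) ℝ} {Qm : Matrix (Fin MM) (Fin MM) ℝ}
    (S : MJLSReal NN MM P Qm) (f : Fin MM → Bool) (τ₀ : ℤ) (σ₀ : Fin NN)
    (A : Fin NN → Matrix (Fin n) (Fin n) ℝ) (B : Fin NN → Matrix (Fin n) (Fin m) ℝ)
    (C : Fin NN → Matrix (Fin ℓ) (Fin n) ℝ) (D : Fin NN → Matrix (Fin ℓ) (Fin m) ℝ)
    (E : Fin NN → Matrix (Fin n) (Fin q) ℝ)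
    (K : Fin NN → Fin T → Matrix (Fin m) (Fin n) ℝ) (i : Fin q) : ENNReal :=
  ∑' k : ℕ, ∫⁻ ω, sqE ((CKmat C D K (rbarProc S.r S.s f τ₀ σ₀ k ω)).mulVec
      (traj (AKmat A B K) (fun χ => E χ.1) (rbarProc S.r S.s f τ₀ σ₀)
        (impulse q i) 0 k ω)) ∂S.μ

-- `‖Σ_K‖₂² < γ`, where `‖Σ_K‖₂² = ∑_{i=1}^q ∑_{χ ∈ 𝔛} μ̄(χ) ‖z(⬝;0,χ,e_iφ)‖₂²` and the
-- expectations are over arbitrary realizations with deterministic initialization `r̄(0) = χ`.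
open Classical in
def H2SqLtSigma {NN MM T n m q ℓ : ℕ} [NeZero T]
    (P : Matrix (Fin NN) (Fin NN) ℝ) (Qm : Matrix (Fin MM) (Fin MM) ℝ) (f : Fin MM → Bool)
    (A : Fin NN → Matrix (Fin n) (Fin n) ℝ) (B : Fin NN → Matrix (Fin n) (Fin m) ℝ)
    (C : Fin NN → Matrix (Fin ℓ) (Fin n) ℝ) (D : Fin NN → Matrix (Fin ℓ) (Fin m) ℝ)
    (E : Fin NN → Matrix (Fin n) (Fin q) ℝ)
    (K : Fin NN → Fin T → Matrix (Fin m) (Fin n) ℝ)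
    (μbar : XT NN MM T → ℝ) (γ : ℝ) : Prop :=
  ∀ (S : Fin q → XT NN MM T → MJLSReal NN MM P Qm)
    (τ : Fin q → XT NN MM T → ℤ) (σv : Fin q → XT NN MM T → Fin NN),
    (∀ i χ, inX f χ → τ i χ ≤ 0 ∧
        (∀ᵐ ω ∂(S i χ).μ, rbarProc (S i χ).r (S i χ).s f (τ i χ) (σv i χ) 0 ω = χ)) →
    (∑ i : Fin q, ∑ χ : XT NN MM T,
        if inX f χ
        then ENNReal.ofReal (μbar χ) * H2TermSigma (S i χ) f (τ i χ) (σv i χ) A B C D E K i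
        else 0)
      < ENNReal.ofReal γ

/-- `∑_k E[‖z̄(k; 0, χ, e_i φ)‖²]` for `Σ̄_K` on a given realization of `θ`. -/
def H2TermBar {NN MM T n m q ℓ : ℕ} [NeZero T]
    {P : Matrix (Fin NN) (Fin NN) ℝ} {Qm : Matrix (Fin MM) (Fin MM) ℝ} {f : Fin MM → Bool}
    (S : ThetaReal NN MM T P Qm f)
    (A : Fin NN → Matrix (Fin n) (Fin n) ℝ) (B : Fin NN → Matrix (Fin n) (Fin m) ℝ)
    (C : Fin NN → Matrix (Fin ℓ) (Fin n) ℝ) (D : Fin NN → Matrix (Fin ℓ) (Fin m) ℝ)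
    (E : Fin NN → Matrix (Fin n) (Fin q) ℝ)
    (K : Fin NN → Fin T → Matrix (Fin m) (Fin n) ℝ) (i : Fin q) : ENNReal :=
  ∑' k : ℕ, ∫⁻ ω, sqE ((CKmat C D K (S.θ k ω)).mulVec
      (traj (AKmat A B K) (fun χ => E χ.1) S.θ (impulse q i) 0 k ω)) ∂S.μ

-- `‖Σ̄_K‖₂² < γ` (the `H₂` norm of `Σ̄_K`, defined with `θ` in place of `r̄`).
open Classical in
def H2SqLtBar {NN MM T n m q ℓ : ℕ} [NeZero T]
    (P : Matrix (Fin NN) (Fin NN) ℝ) (Qm : Matrix (Fin MM) (Fin MM) ℝ) (f : Fin MM → Bool)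
    (A : Fin NN → Matrix (Fin n) (Fin n) ℝ) (B : Fin NN → Matrix (Fin n) (Fin m) ℝ)
    (C : Fin NN → Matrix (Fin ℓ) (Fin n) ℝ) (D : Fin NN → Matrix (Fin ℓ) (Fin m) ℝ)
    (E : Fin NN → Matrix (Fin n) (Fin q) ℝ)
    (K : Fin NN → Fin T → Matrix (Fin m) (Fin n) ℝ)
    (μbar : XT NN MM T → ℝ) (γ : ℝ) : Prop :=
  ∀ (S : Fin q → XT NN MM T → ThetaReal NN MM T P Qm f),
    (∀ i χ, inX f χ → (∀ᵐ ω ∂(S i χ).μ, (S i χ).θ 0 ω = χ)) →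
    (∑ i : Fin q, ∑ χ : XT NN MM T,
        if inX f χ
        then ENNReal.ofReal (μbar χ) * H2TermBar (S i χ) A B C D E K i
        else 0)
      < ENNReal.ofReal γ

/-- The σ-algebra `Θ_k` generated by `r(0), s(0), …, r(k), s(k)`, for a realization. -/
def sigFiltSigma {NN MM : ℕ} {P : Matrix (Fin NN) (Fin NN) ℝ}
    {Q : Matrix (Fin MM) (Fin MM) ℝ} (S : MJLSReal NN MM P Q) (k : ℕ) :
    MeasurableSpace S.Ω :=
  ⨆ j ∈ Finset.range (k + 1),
    (MeasurableSpace.comap (S.r j) inferInstance ⊔ MeasurableSpace.comap (S.s j) inferInstance)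

/-- The σ-algebra generated by `θ(0), …, θ(k)`, for a realization of `θ`. -/
def sigFiltBar {NN MM T : ℕ} [NeZero T] {P : Matrix (Fin NN) (Fin NN) ℝ}
    {Q : Matrix (Fin MM) (Fin MM) ℝ} {f : Fin MM → Bool} (S : ThetaReal NN MM T P Q f)
    (k : ℕ) : MeasurableSpace S.Ω :=
  ⨆ j ∈ Finset.range (k + 1), MeasurableSpace.comap (S.θ j) inferInstance

/-- `Σ_K` satisfies `‖Σ_K‖∞² < γ`: there is `0 ≤ c < γ` such that `‖z‖₂² ≤ c ‖w‖₂²`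
for every realization, every deterministic initialization `r̄(0) = r̄₀ ∈ 𝔛`, and
every nonzero `w ∈ ℓ²(ℝ^q)` adapted to `(Θ_k)_k` (with `x₀ = 0`). -/
def HinfSqLtSigma {NN MM T n m q ℓ : ℕ} [NeZero T]
    (P : Matrix (Fin NN) (Fin NN) ℝ) (Qm : Matrix (Fin MM) (Fin MM) ℝ) (f : Fin MM → Bool)
    (A : Fin NN → Matrix (Fin n) (Fin n) ℝ) (B : Fin NN → Matrix (Fin n) (Fin m) ℝ)
    (C : Fin NN → Matrix (Fin ℓ) (Fin n) ℝ) (D : Fin NN → Matrix (Fin ℓ) (Fin m) ℝ)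
    (E : Fin NN → Matrix (Fin n) (Fin q) ℝ)
    (K : Fin NN → Fin T → Matrix (Fin m) (Fin n) ℝ) (γ : ℝ) : Prop :=
  ∃ c : ℝ, 0 ≤ c ∧ c < γ ∧
    ∀ (S : MJLSReal NN MM P Qm) (τ₀ : ℤ), τ₀ ≤ 0 → ∀ (σ₀ : Fin NN) (χ : XT NN MM T),
      inX f χ → (∀ᵐ ω ∂S.μ, rbarProc S.r S.s f τ₀ σ₀ 0 ω = χ) →
      ∀ (w : ℕ → S.Ω → Fin q → ℝ),
        (∀ k, Measurable[sigFiltSigma S k] (w k)) →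
        0 < (∑' k : ℕ, ∫⁻ ω, sqE (w k ω) ∂S.μ) →
        (∑' k : ℕ, ∫⁻ ω, sqE (w k ω) ∂S.μ) ≠ ⊤ →
        (∑' k : ℕ, ∫⁻ ω, sqE ((CKmat C D K (rbarProc S.r S.s f τ₀ σ₀ k ω)).mulVec
            (traj (AKmat A B K) (fun χ' => E χ'.1) (rbarProc S.r S.s f τ₀ σ₀) w 0 k ω)) ∂S.μ)
          ≤ ENNReal.ofReal c * (∑' k : ℕ, ∫⁻ ω, sqE (w k ω) ∂S.μ)

/-- `Σ̄_K` satisfies `‖Σ̄_K‖∞² < γ` (disturbances adapted to the filtration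
generated by `θ`). -/
def HinfSqLtBar {NN MM T n m q ℓ : ℕ} [NeZero T]
    (P : Matrix (Fin NN) (Fin NN) ℝ) (Qm : Matrix (Fin MM) (Fin MM) ℝ) (f : Fin MM → Bool)
    (A : Fin NN → Matrix (Fin n) (Fin n) ℝ) (B : Fin NN → Matrix (Fin n) (Fin m) ℝ)
    (C : Fin NN → Matrix (Fin ℓ) (Fin n) ℝ) (D : Fin NN → Matrix (Fin ℓ) (Fin m) ℝ)
    (E : Fin NN → Matrix (Fin n) (Fin q) ℝ)
    (K : Fin NN → Fin T → Matrix (Fin m) (Fin n) ℝ) (γ : ℝ) : Prop :=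
  ∃ c : ℝ, 0 ≤ c ∧ c < γ ∧
    ∀ (S : ThetaReal NN MM T P Qm f) (χ : XT NN MM T),
      inX f χ → (∀ᵐ ω ∂S.μ, S.θ 0 ω = χ) →
      ∀ (w : ℕ → S.Ω → Fin q → ℝ),
        (∀ k, Measurable[sigFiltBar S k] (w k)) →
        0 < (∑' k : ℕ, ∫⁻ ω, sqE (w k ω) ∂S.μ) →
        (∑' k : ℕ, ∫⁻ ω, sqE (w k ω) ∂S.μ) ≠ ⊤ →
        (∑' k : ℕ, ∫⁻ ω, sqE ((CKmat C D K (S.θ k ω)).mulVec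
            (traj (AKmat A B K) (fun χ' => E χ'.1) S.θ w 0 k ω)) ∂S.μ)
          ≤ ENNReal.ofReal c * (∑' k : ℕ, ∫⁻ ω, sqE (w k ω) ∂S.μ)

/-- The symmetric 4×4 block matrix appearing in the `H∞` LMI, with diagonal blocks
`D1, γ I_q, D3, I_ℓ`, sub-diagonal blocks `(3,1) = B31`, `(3,2) = B32`, `(4,1) = B41`,
the corresponding transposed blocks above the diagonal, and zeros elsewhere. -/
def hinfBlock {n q ℓ : ℕ} (γ : ℝ) (D1 D3 : Matrix (Fin n) (Fin n) ℝ)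
    (B31 : Matrix (Fin n) (Fin n) ℝ) (B32 : Matrix (Fin n) (Fin q) ℝ)
    (B41 : Matrix (Fin ℓ) (Fin n) ℝ) :
    Matrix ((Fin n ⊕ Fin q) ⊕ (Fin n ⊕ Fin ℓ)) ((Fin n ⊕ Fin q) ⊕ (Fin n ⊕ Fin ℓ)) ℝ :=
  Matrix.fromBlocks
    (Matrix.fromBlocks D1 0 0 (γ • (1 : Matrix (Fin q) (Fin q) ℝ)))
    (Matrix.fromBlocks B31ᵀ B41ᵀ B32ᵀ 0)
    (Matrix.fromBlocks B31 B32 B41 0)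
    (Matrix.fromBlocks D3 0 0 (1 : Matrix (Fin ℓ) (Fin ℓ) ℝ))

section PartOne
open scoped MatrixOrder
set_option linter.unusedSectionVars false

lemma h2_psd_factor {n : ℕ} {M : Matrix (Fin n) (Fin n) ℝ} (hM : M.PosSemidef) :
    ∃ B : Matrix (Fin n) (Fin n) ℝ, M = Bᵀ * B := by
  obtain ⟨B, hB⟩ := CStarAlgebra.nonneg_iff_eq_star_mul_self.mp hM.nonneg
  refine ⟨B, ?_⟩
  rw [hB, Matrix.star_eq_conjTranspose, conjTranspose_eq_transpose_of_trivial]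

lemma h2_psd_iff {n : ℕ} {M : Matrix (Fin n) (Fin n) ℝ} :
    M.PosSemidef ↔ M.IsHermitian ∧ ∀ x : Fin n → ℝ, 0 ≤ x ⬝ᵥ (M *ᵥ x) := by
  rw [posSemidef_iff_dotProduct_mulVec]
  simp

lemma h2_psd_le_trace {n : ℕ} {M : Matrix (Fin n) (Fin n) ℝ} (hM : M.PosSemidef) :
    M ≤ M.trace • (1 : Matrix (Fin n) (Fin n) ℝ) := by
  rw [Matrix.le_iff, h2_psd_iff]
  refine ⟨?_, fun x => ?_⟩
  · apply IsHermitian.sub _ hM.isHermitian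
    ext i j
    simp [Matrix.one_apply, eq_comm]
  · obtain ⟨B, hB⟩ := h2_psd_factor hM
    have h1 : x ⬝ᵥ (M *ᵥ x) = ∑ i, (∑ j, B i j * x j) ^ 2 := by
      rw [hB, ← mulVec_mulVec, dotProduct_mulVec, vecMul_transpose]
      simp [dotProduct, mulVec, sq]
    have h2 : M.trace = ∑ i, ∑ j, (B i j) ^ 2 := by
      rw [hB, Matrix.trace, Finset.sum_comm]
      simp [Matrix.mul_apply, sq]
    rw [sub_mulVec, dotProduct_sub, h1, smul_mulVec, one_mulVec, dotProduct_smul, h2,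
      smul_eq_mul, Finset.sum_mul, sub_nonneg]
    refine Finset.sum_le_sum fun i _ => ?_
    have := Finset.sum_mul_sq_le_sq_mul_sq Finset.univ (fun j => B i j) x
    simpa [dotProduct, sq] using this

lemma h2_smul_mono {n : ℕ} {M N : Matrix (Fin n) (Fin n) ℝ} {a : ℝ} (ha : 0 ≤ a) (h : M ≤ N) :
    a • M ≤ a • N := by
  rw [Matrix.le_iff] at *
  rw [← smul_sub]
  exact h.smul ha

lemma h2_conj_mono {n k : ℕ} {M N : Matrix (Fin n) (Fin n) ℝ} (A : Matrix (Fin k) (Fin n) ℝ)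
    (h : M ≤ N) : A * M * Aᵀ ≤ A * N * Aᵀ := by
  rw [Matrix.le_iff] at *
  have := h.mul_mul_conjTranspose_same A
  rw [conjTranspose_eq_transpose_of_trivial] at this
  rwa [Matrix.mul_sub, Matrix.sub_mul] at this

lemma h2_posDef_ge {n : ℕ} {M : Matrix (Fin n) (Fin n) ℝ} (hM : M.PosDef) :
    ∃ a : ℝ, 0 < a ∧ a • (1 : Matrix (Fin n) (Fin n) ℝ) ≤ M := by
  obtain ⟨B, hB⟩ := h2_psd_factor hM.posSemidef
  have hu : IsUnit M.det := (Matrix.isUnit_iff_isUnit_det _).mp hM.isUnit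
  have huB : IsUnit B.det := by
    rw [hB, det_mul] at hu
    exact isUnit_of_mul_isUnit_right hu
  have hN : ((B⁻¹)ᵀ * B⁻¹).PosSemidef := by
    have := posSemidef_conjTranspose_mul_self B⁻¹
    rwa [conjTranspose_eq_transpose_of_trivial] at this
  have h1 := h2_conj_mono Bᵀ (h2_psd_le_trace hN)
  set t := ((B⁻¹)ᵀ * B⁻¹).trace
  have ht : 0 ≤ t := hN.trace_nonneg
  have h3 : Bᵀ * ((B⁻¹)ᵀ * B⁻¹) * Bᵀᵀ = 1 := by
    rw [transpose_transpose, Matrix.mul_assoc, Matrix.mul_assoc, nonsing_inv_mul _ huB,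
      Matrix.mul_one, ← transpose_mul, nonsing_inv_mul _ huB, transpose_one]
  rw [h3] at h1
  have h4 : Bᵀ * t • (1 : Matrix (Fin n) (Fin n) ℝ) * Bᵀᵀ = t • M := by
    rw [transpose_transpose, hB]; simp
  rw [h4] at h1
  refine ⟨(t + 1)⁻¹, by positivity, ?_⟩
  have h5 : (1 : Matrix (Fin n) (Fin n) ℝ) ≤ (t + 1) • M := by
    rw [add_smul, one_smul]
    exact le_add_of_le_of_nonneg h1 hM.posSemidef.nonneg
  have := h2_smul_mono (a := (t + 1)⁻¹) (by positivity) h5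
  rwa [smul_smul, inv_mul_cancel₀ (by positivity), one_smul] at this

lemma h2_trace_mul_nonneg {n : ℕ} {M N : Matrix (Fin n) (Fin n) ℝ} (hM : 0 ≤ M) (hN : 0 ≤ N) :
    0 ≤ (M * N).trace := by
  obtain ⟨B, hB⟩ := h2_psd_factor (nonneg_iff_posSemidef.mp hN)
  rw [hB, ← Matrix.mul_assoc, Matrix.trace_mul_comm, ← Matrix.mul_assoc]
  have := (nonneg_iff_posSemidef.mp hM).mul_mul_conjTranspose_same B
  rw [conjTranspose_eq_transpose_of_trivial] at this
  exact this.trace_nonneg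

lemma h2_trace_mul_mono {n : ℕ} {M N N' : Matrix (Fin n) (Fin n) ℝ} (hM : 0 ≤ M) (hN : N ≤ N') :
    (M * N).trace ≤ (M * N').trace := by
  have := h2_trace_mul_nonneg hM (sub_nonneg.mpr hN)
  rw [Matrix.mul_sub, trace_sub] at this
  linarith

variable {S : Type} [Fintype S] [DecidableEq S] {n : ℕ}

/-- Forward second moment operator. -/
def h2T (p : S → S → ℝ) (A : S → Matrix (Fin n) (Fin n) ℝ)
    (R : S → Matrix (Fin n) (Fin n) ℝ) (χ : S) : Matrix (Fin n) (Fin n) ℝ :=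
  ∑ χ', p χ' χ • (A χ' * R χ' * (A χ')ᵀ)

/-- Backward (adjoint) operator. -/
def h2L (p : S → S → ℝ) (A : S → Matrix (Fin n) (Fin n) ℝ)
    (M : S → Matrix (Fin n) (Fin n) ℝ) (χ : S) : Matrix (Fin n) (Fin n) ℝ :=
  (A χ)ᵀ * (∑ χ', p χ χ' • M χ') * A χ

/-- Trace pairing. -/
def h2ip (M R : S → Matrix (Fin n) (Fin n) ℝ) : ℝ := ∑ χ, (M χ * R χ).trace

lemma h2_adj (p : S → S → ℝ) (A : S → Matrix (Fin n) (Fin n) ℝ)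
    (M R : S → Matrix (Fin n) (Fin n) ℝ) : h2ip (h2L p A M) R = h2ip M (h2T p A R) := by
  have h1 : h2ip (h2L p A M) R
      = ∑ χ, ∑ χ', p χ χ' * (M χ' * (A χ * R χ * (A χ)ᵀ)).trace := by
    unfold h2ip h2L
    refine Finset.sum_congr rfl fun χ _ => ?_
    rw [Matrix.mul_assoc, Matrix.mul_assoc, Matrix.trace_mul_comm, Matrix.mul_assoc,
      Finset.sum_mul, trace_sum]
    refine Finset.sum_congr rfl fun χ' _ => ?_
    rw [Matrix.smul_mul, trace_smul, smul_eq_mul]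
  have h2 : h2ip M (h2T p A R)
      = ∑ χ', ∑ χ, p χ χ' * (M χ' * (A χ * R χ * (A χ)ᵀ)).trace := by
    unfold h2ip h2T
    refine Finset.sum_congr rfl fun χ _ => ?_
    rw [Finset.mul_sum, trace_sum]
    refine Finset.sum_congr rfl fun χ' _ => ?_
    rw [Matrix.mul_smul, trace_smul, smul_eq_mul]
  rw [h1, h2, Finset.sum_comm]

lemma h2_adj_iter (p : S → S → ℝ) (A : S → Matrix (Fin n) (Fin n) ℝ) (k : ℕ)
    (M R : S → Matrix (Fin n) (Fin n) ℝ) :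
    h2ip ((h2L p A)^[k] M) R = h2ip M ((h2T p A)^[k] R) := by
  induction k generalizing M with
  | zero => rfl
  | succ k ih => rw [Function.iterate_succ_apply, ih, h2_adj, ← Function.iterate_succ_apply' (h2T p A)]

lemma h2ip_mono {M R R' : S → Matrix (Fin n) (Fin n) ℝ} (hM : 0 ≤ M) (h : R ≤ R') :
    h2ip M R ≤ h2ip M R' :=
  Finset.sum_le_sum fun χ _ => h2_trace_mul_mono (hM χ) (h χ)

lemma h2ip_nonneg {M R : S → Matrix (Fin n) (Fin n) ℝ} (hM : 0 ≤ M) (hR : 0 ≤ R) :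
    0 ≤ h2ip M R :=
  Finset.sum_nonneg fun χ _ => h2_trace_mul_nonneg (hM χ) (hR χ)

lemma h2ip_add (M R R' : S → Matrix (Fin n) (Fin n) ℝ) :
    h2ip M (R + R') = h2ip M R + h2ip M R' := by
  simp [h2ip, Matrix.mul_add, Finset.sum_add_distrib]

lemma h2ip_smul (M R : S → Matrix (Fin n) (Fin n) ℝ) (a : ℝ) :
    h2ip M (a • R) = a * h2ip M R := by
  simp [h2ip, Finset.mul_sum]

lemma h2ip_sum {ι : Type*} (s : Finset ι) (M : S → Matrix (Fin n) (Fin n) ℝ)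
    (R : ι → S → Matrix (Fin n) (Fin n) ℝ) :
    h2ip M (∑ i ∈ s, R i) = ∑ i ∈ s, h2ip M (R i) := by
  simp only [h2ip, Finset.sum_apply, Finset.mul_sum, trace_sum]
  rw [Finset.sum_comm]

lemma h2T_add (p : S → S → ℝ) (A R R' : S → Matrix (Fin n) (Fin n) ℝ) :
    h2T p A (R + R') = h2T p A R + h2T p A R' := by
  ext χ : 1
  simp [h2T, Matrix.mul_add, Matrix.add_mul, Finset.sum_add_distrib]

lemma h2T_smul (p : S → S → ℝ) (A R : S → Matrix (Fin n) (Fin n) ℝ) (a : ℝ) :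
    h2T p A (a • R) = a • h2T p A R := by
  ext χ : 1
  simp only [h2T, Pi.smul_apply, Finset.smul_sum, Matrix.mul_smul, Matrix.smul_mul]
  exact Finset.sum_congr rfl fun χ' _ => smul_comm _ _ _

/-- `h2T` as a linear map. -/
def h2Tl (p : S → S → ℝ) (A : S → Matrix (Fin n) (Fin n) ℝ) :
    (S → Matrix (Fin n) (Fin n) ℝ) →ₗ[ℝ] (S → Matrix (Fin n) (Fin n) ℝ) where
  toFun := h2T p A
  map_add' := h2T_add p A
  map_smul' a R := h2T_smul p A R a

lemma h2T_iter_eq (p : S → S → ℝ) (A R : S → Matrix (Fin n) (Fin n) ℝ) (k : ℕ) :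
    (h2T p A)^[k] R = ((h2Tl p A) ^ k) R := by
  rw [Module.End.pow_apply]; rfl

lemma h2T_mono {p : S → S → ℝ} (hp : ∀ a b, 0 ≤ p a b) (A : S → Matrix (Fin n) (Fin n) ℝ) :
    Monotone (h2T p A) := fun _ _ h _ =>
  Finset.sum_le_sum fun χ' _ => h2_smul_mono (hp _ _) (h2_conj_mono _ (h χ'))

lemma h2T_zero (p : S → S → ℝ) (A : S → Matrix (Fin n) (Fin n) ℝ) :
    h2T p A 0 = 0 := (h2Tl p A).map_zero

lemma h2T_iter_nonneg {p : S → S → ℝ} (hp : ∀ a b, 0 ≤ p a b) (A : S → Matrix (Fin n) (Fin n) ℝ)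
    {R : S → Matrix (Fin n) (Fin n) ℝ} (hR : 0 ≤ R) (k : ℕ) : 0 ≤ (h2T p A)^[k] R := by
  have := (h2T_mono hp A).iterate k hR
  rwa [h2T_iter_eq, map_zero] at this

/-- Single-mode rank one second moment. -/
def h2single (χ : S) (x : Fin n → ℝ) : S → Matrix (Fin n) (Fin n) ℝ :=
  Pi.single χ (vecMulVec x x)

lemma h2ip_single (M : S → Matrix (Fin n) (Fin n) ℝ) (χ : S) (x : Fin n → ℝ) :
    h2ip M (h2single χ x) = x ⬝ᵥ (M χ *ᵥ x) := by
  unfold h2ip h2single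
  rw [Finset.sum_eq_single χ]
  · rw [Pi.single_eq_same, mul_vecMulVec, trace_vecMulVec, dotProduct_comm]
  · intro b _ hb
    rw [Pi.single_eq_of_ne hb]; simp
  · simp

lemma h2_sum_single : (∑ χ : S, ∑ i : Fin n, h2single χ (Pi.single i (1 : ℝ)))
    = (fun _ => (1 : Matrix (Fin n) (Fin n) ℝ)) := by
  ext χ a b
  simp only [Finset.sum_apply, h2single, Matrix.sum_apply]
  rw [Finset.sum_eq_single χ]
  · simp [vecMulVec_apply, Pi.single_apply, Matrix.one_apply]
  · intro c _ hc
    simp [Pi.single_eq_of_ne (Ne.symm hc)]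
  · simp

/-- Deterministic stability. -/
def h2DetMSS (p : S → S → ℝ) (A : S → Matrix (Fin n) (Fin n) ℝ) : Prop :=
  ∃ c : ℝ, 0 < c ∧ ∃ lam : ℝ, 0 ≤ lam ∧ lam < 1 ∧ ∀ (χ : S) (x : Fin n → ℝ) (k : ℕ),
    x ⬝ᵥ (((h2L p A)^[k] (fun _ => 1)) χ *ᵥ x) ≤ c * lam ^ k * ∑ i, (x i) ^ 2

lemma h2_uniform {Q : S → Matrix (Fin n) (Fin n) ℝ} (hQ : ∀ χ, (Q χ).PosDef) :
    ∃ a : ℝ, 0 < a ∧ a ≤ 1 ∧ a • (fun _ => (1 : Matrix (Fin n) (Fin n) ℝ)) ≤ Q := by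
  choose a ha h using fun χ => h2_posDef_ge (hQ χ)
  have : ∃ b : ℝ, 0 < b ∧ b ≤ 1 ∧ ∀ χ, b ≤ a χ := by
    rcases isEmpty_or_nonempty S with hS | hS
    · exact ⟨1, one_pos, le_rfl, fun χ => isEmptyElim χ⟩
    · refine ⟨min 1 (Finset.univ.inf' Finset.univ_nonempty a), ?_, min_le_left _ _, fun χ => ?_⟩
      · rw [lt_min_iff, Finset.lt_inf'_iff]
        exact ⟨one_pos, fun χ _ => ha χ⟩
      · exact (min_le_right _ _).trans (Finset.inf'_le _ (Finset.mem_univ χ))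
  obtain ⟨b, hb, hb1, hba⟩ := this
  refine ⟨b, hb, hb1, fun χ => le_trans ?_ (h χ)⟩
  rw [Pi.smul_apply, Matrix.le_iff, ← sub_smul]
  exact PosSemidef.one.smul (sub_nonneg.mpr (hba χ))

lemma h2_one_bound {R : S → Matrix (Fin n) (Fin n) ℝ} (hR : 0 ≤ R) :
    R ≤ (h2ip (fun _ => 1) R) • (fun _ => (1 : Matrix (Fin n) (Fin n) ℝ)) := by
  intro χ
  refine (h2_psd_le_trace (nonneg_iff_posSemidef.mp (hR χ))).trans ?_
  rw [Pi.smul_apply, Matrix.le_iff, ← sub_smul]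
  refine PosSemidef.one.smul (sub_nonneg.mpr ?_)
  unfold h2ip
  simp only [Matrix.one_mul]
  exact Finset.single_le_sum (f := fun χ => (R χ).trace)
    (fun i _ => (nonneg_iff_posSemidef.mp (hR i)).trace_nonneg) (Finset.mem_univ χ)

lemma h2_single_nonneg (χ : S) (x : Fin n → ℝ) : 0 ≤ h2single χ x := by
  intro χ'
  unfold h2single
  by_cases h : χ' = χ
  · subst h
    rw [Pi.single_eq_same]
    have := posSemidef_vecMulVec_self_star x
    simpa using this.nonneg
  · rw [Pi.single_eq_of_ne h]; exact le_rfl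

lemma h2_one_nonneg : (0 : S → Matrix (Fin n) (Fin n) ℝ) ≤ (fun _ => 1) :=
  fun _ => PosSemidef.one.nonneg

lemma h2_det_of_lmi {p : S → S → ℝ} (hp : ∀ a b, 0 ≤ p a b) (A : S → Matrix (Fin n) (Fin n) ℝ)
    (G W : S → Matrix (Fin n) (Fin n) ℝ) (hG : 0 ≤ G) (hW : 0 ≤ W) (γ : ℝ)
    (Q : S → Matrix (Fin n) (Fin n) ℝ) (hγ : 0 < γ) (hQ : ∀ χ, (Q χ).PosDef) (h1 : h2ip W Q < γ)
    (h2 : ∀ χ, (Q χ - (h2T p A Q χ + G χ)).PosDef) :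
    h2DetMSS p A ∧ (∑' k, ENNReal.ofReal (h2ip W ((h2T p A)^[k] G))) < ENNReal.ofReal γ := by
  constructor
  · obtain ⟨a, ha, ha1, haQ⟩ := h2_uniform hQ
    obtain ⟨d, hd, hd1, hdQ⟩ := h2_uniform h2
    set I : S → Matrix (Fin n) (Fin n) ℝ := fun _ => 1 with hI
    have hQ0 : 0 ≤ Q := fun χ => (hQ χ).posSemidef.nonneg
    set t := h2ip I Q with ht
    have ht0 : 0 ≤ t := h2ip_nonneg h2_one_nonneg hQ0
    set e := d / (t + 1) with he
    have he0 : 0 < e := by positivity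
    have he1 : e ≤ 1 := by
      rw [he, div_le_one (by positivity)]; linarith
    -- e • Q ≤ d • I
    have hsm : ∀ {R R' : S → Matrix (Fin n) (Fin n) ℝ} {b : ℝ}, 0 ≤ b → R ≤ R' → b • R ≤ b • R' :=
      fun hb h χ => h2_smul_mono hb (h χ)
    have heQ : e • Q ≤ d • I := by
      have q1 : Q ≤ (t + 1) • I := by
        rw [add_smul, one_smul]
        exact le_add_of_le_of_nonneg (h2_one_bound hQ0) h2_one_nonneg
      have := hsm he0.le q1
      rwa [smul_smul, he, div_mul_cancel₀ _ (by positivity)] at this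
    have hTQ : h2T p A Q ≤ (1 - e) • Q := by
      have : e • Q ≤ Q - (h2T p A Q + G) := heQ.trans hdQ
      rw [sub_smul, one_smul, le_sub_comm]
      refine this.trans (sub_le_sub_left ?_ _)
      exact le_add_of_nonneg_right hG
    have hiter : ∀ k, (h2T p A)^[k] Q ≤ (1 - e) ^ k • Q := by
      intro k
      induction k with
      | zero => simp
      | succ k ih =>
        rw [Function.iterate_succ_apply']
        refine (h2T_mono hp A ih).trans ?_
        rw [h2T_smul, pow_succ, ← smul_smul]
        exact hsm (pow_nonneg (by linarith) _) hTQ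
    refine ⟨a⁻¹ * t + 1, by positivity, 1 - e, by linarith, by linarith, fun χ x k => ?_⟩
    rw [← h2ip_single, h2_adj_iter]
    set y := ∑ i, (x i) ^ 2 with hy
    have hy0 : 0 ≤ y := Finset.sum_nonneg fun i _ => sq_nonneg _
    have hx : h2single χ x ≤ (y * a⁻¹) • Q := by
      have e1 := h2_one_bound (h2_single_nonneg χ x)
      rw [h2ip_single, one_mulVec] at e1
      have e2 : x ⬝ᵥ x = y := by simp [dotProduct, hy, sq]
      rw [e2] at e1
      refine e1.trans ?_
      have e3 := hsm (b := y * a⁻¹) (by positivity) haQ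
      rwa [smul_smul, mul_assoc, inv_mul_cancel₀ ha.ne', mul_one] at e3
    have hk := (h2T_mono hp A).iterate k hx
    rw [h2T_iter_eq p A ((y * a⁻¹) • Q), map_smul, ← h2T_iter_eq] at hk
    have hk2 := h2ip_mono (M := I) h2_one_nonneg (hk.trans (hsm (by positivity) (hiter k)))
    rw [h2ip_smul, h2ip_smul, ← ht] at hk2
    refine hk2.trans ?_
    have : 0 ≤ (1 - e) ^ k := pow_nonneg (by linarith) _
    nlinarith [mul_nonneg this hy0]
  · have hG' : h2T p A Q + G ≤ Q := fun χ => by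
      have := (h2 χ).posSemidef
      rwa [Matrix.le_iff]
    have hQ0 : 0 ≤ Q := fun χ => (hQ χ).posSemidef.nonneg
    have hsum : ∀ N, (∑ k ∈ Finset.range N, (h2T p A)^[k] G) ≤ Q := by
      intro N
      induction N with
      | zero => simpa using hQ0
      | succ N ih =>
        rw [Finset.sum_range_succ']
        refine le_trans ?_ hG'
        refine add_le_add ?_ le_rfl
        have := h2T_mono hp A ih
        refine le_trans (le_of_eq ?_) this
        simp_rw [Function.iterate_succ_apply']
        exact (map_sum (h2Tl p A) _ _).symm
    refine lt_of_le_of_lt ?_ ((ENNReal.ofReal_lt_ofReal_iff hγ).mpr h1)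
    refine ENNReal.tsum_le_of_sum_range_le fun N => ?_
    rw [← ENNReal.ofReal_sum_of_nonneg, ← h2ip_sum]
    · exact ENNReal.ofReal_le_ofReal (h2ip_mono hW (hsum N))
    · intro k _
      have := h2ip_mono hW (h2T_iter_nonneg hp A hG k)
      simpa [h2ip] using this

lemma h2_lmi_of_det {p : S → S → ℝ} (hp : ∀ a b, 0 ≤ p a b) (A : S → Matrix (Fin n) (Fin n) ℝ)
    (G W : S → Matrix (Fin n) (Fin n) ℝ) (hG : 0 ≤ G) (hW : 0 ≤ W) (γ : ℝ) (hM : h2DetMSS p A)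
    (hH : (∑' k, ENNReal.ofReal (h2ip W ((h2T p A)^[k] G))) < ENNReal.ofReal γ) :
    ∃ Q : S → Matrix (Fin n) (Fin n) ℝ, (∀ χ, (Q χ).PosDef) ∧ h2ip W Q < γ ∧
      (∀ χ, (Q χ - (h2T p A Q χ + G χ)).PosDef) := by
  obtain ⟨c, hc, lam, hl0, hl1, hb⟩ := hM
  set I : S → Matrix (Fin n) (Fin n) ℝ := fun _ => 1 with hI
  have hsm : ∀ {R R' : S → Matrix (Fin n) (Fin n) ℝ} {b : ℝ}, 0 ≤ b → R ≤ R' → b • R ≤ b • R' :=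
    fun hb h χ => h2_smul_mono hb (h χ)
  have nn : ∀ {M R : S → Matrix (Fin n) (Fin n) ℝ}, 0 ≤ M → 0 ≤ R → 0 ≤ h2ip M R := by
    intro M R hM hR
    have := h2ip_mono hM hR
    simpa [h2ip] using this
  have h0 : (0 : S → Matrix (Fin n) (Fin n) ℝ) ≤ I := h2_one_nonneg
  -- decay of the iterates of the identity
  obtain ⟨c1, hc1, hc1b⟩ : ∃ c1 : ℝ, 0 ≤ c1 ∧ ∀ k, h2ip I ((h2T p A)^[k] I) ≤ c1 * lam ^ k := by
    refine ⟨∑ χ : S, ∑ i : Fin n, c, by positivity, fun k => ?_⟩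
    rw [hI, ← h2_sum_single, h2T_iter_eq, map_sum, h2ip_sum, Finset.sum_mul, h2_sum_single]
    refine Finset.sum_le_sum fun χ _ => ?_
    rw [map_sum, h2ip_sum, Finset.sum_mul]
    refine Finset.sum_le_sum fun i _ => ?_
    rw [← h2T_iter_eq, ← h2_adj_iter, h2ip_single]
    refine (hb χ _ k).trans (le_of_eq ?_)
    simp [Pi.single_apply]
  -- pairing with W
  set w := h2ip I W with hw
  have hw0 : 0 ≤ w := nn h0 hW
  have hWb : ∀ R, 0 ≤ R → h2ip W R ≤ w * h2ip I R := by
    intro R hR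
    have comm : ∀ X Y : S → Matrix (Fin n) (Fin n) ℝ, h2ip X Y = h2ip Y X := fun X Y =>
      Finset.sum_congr rfl fun χ _ => Matrix.trace_mul_comm _ _
    rw [comm W R, comm I R, ← h2ip_smul]
    exact h2ip_mono hR (h2_one_bound hW)
  have hterm : ∀ k, 0 ≤ h2ip W ((h2T p A)^[k] G) := fun k => nn hW (h2T_iter_nonneg hp A hG k)
  set h := (∑' k, ENNReal.ofReal (h2ip W ((h2T p A)^[k] G))) with hh
  have hγ : 0 < γ := by
    by_contra hcon
    rw [ENNReal.ofReal_of_nonpos (not_lt.mp hcon)] at hH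
    exact not_lt_zero hH
  have htop : h ≠ ⊤ := hH.ne_top
  have hlt : h.toReal < γ := by
    rw [← ENNReal.ofReal_lt_ofReal_iff hγ, ENNReal.ofReal_toReal htop]; exact hH
  have hpart : ∀ N, ∑ k ∈ Finset.range N, h2ip W ((h2T p A)^[k] G) ≤ h.toReal := by
    intro N
    rw [← ENNReal.ofReal_le_iff_le_toReal htop, ENNReal.ofReal_sum_of_nonneg fun k _ => hterm k]
    exact ENNReal.sum_le_tsum _
  have hgeo : ∀ N, ∑ k ∈ Finset.range N, lam ^ k ≤ (1 - lam)⁻¹ := by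
    intro N
    rw [← tsum_geometric_of_lt_one hl0 hl1]
    exact (summable_geometric_of_lt_one hl0 hl1).sum_le_tsum _ fun k _ => pow_nonneg hl0 k
  set c2 := w * (c1 * (1 - lam)⁻¹) with hc2
  have hl : 0 < 1 - lam := by linarith
  have hc20 : 0 ≤ c2 := by positivity
  set e := (γ - h.toReal) / (c2 + 1) with he
  have he0 : 0 < e := div_pos (by linarith) (by linarith)
  have hec : e * c2 < γ - h.toReal := by
    have : e * (c2 + 1) = γ - h.toReal := div_mul_cancel₀ _ (by positivity)
    nlinarith
  -- choose the truncation
  set g := h2ip I G with hg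
  have hg0 : 0 ≤ g := nn h0 hG
  obtain ⟨N, hN⟩ : ∃ N : ℕ, (g + e) * (c1 * lam ^ N) < e := by
    have : Filter.Tendsto (fun N : ℕ => (g + e) * (c1 * lam ^ N)) Filter.atTop (nhds 0) := by
      have := ((tendsto_pow_atTop_nhds_zero_of_lt_one hl0 hl1).const_mul c1).const_mul (g + e)
      simpa using this
    exact ((this.eventually_lt_const he0)).exists
  have hN1 : ∃ N : ℕ, (g + e) * (c1 * lam ^ (N + 1)) < e := by
    refine ⟨N, lt_of_le_of_lt ?_ hN⟩
    have : lam ^ (N + 1) ≤ lam ^ N := pow_le_pow_of_le_one hl0 hl1.le (Nat.le_succ N)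
    gcongr
  obtain ⟨N, hN⟩ := hN1
  set H := G + e • I with hHdef
  have heI : 0 ≤ e • I := fun χ => (PosSemidef.one.smul he0.le).nonneg
  have hH0 : 0 ≤ H := add_nonneg hG heI
  refine ⟨∑ k ∈ Finset.range (N + 1), (h2T p A)^[k] H, fun χ => ?_, ?_, fun χ => ?_⟩
  · rw [Finset.sum_range_succ', Pi.add_apply, Finset.sum_apply]
    refine PosDef.posSemidef_add (posSemidef_sum _ fun k _ =>
      nonneg_iff_posSemidef.mp (h2T_iter_nonneg hp A hH0 _ χ)) ?_
    exact PosDef.posSemidef_add (nonneg_iff_posSemidef.mp (hG χ)) (PosDef.one.smul he0)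
  · rw [h2ip_sum]
    have : ∀ k, h2ip W ((h2T p A)^[k] H)
        ≤ h2ip W ((h2T p A)^[k] G) + e * (w * (c1 * lam ^ k)) := by
      intro k
      rw [hHdef, h2T_iter_eq, map_add, map_smul, ← h2T_iter_eq, ← h2T_iter_eq, h2ip_add, h2ip_smul]
      have q1 := hWb _ (h2T_iter_nonneg hp A h0 k)
      have q2 := hc1b k
      gcongr
      exact q1.trans (by gcongr)
    refine lt_of_le_of_lt (Finset.sum_le_sum fun k _ => this k) ?_
    rw [Finset.sum_add_distrib, ← Finset.mul_sum, ← Finset.mul_sum, ← Finset.mul_sum]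
    have q3 : e * (w * (c1 * ∑ k ∈ Finset.range (N + 1), lam ^ k)) ≤ e * c2 := by
      have := hgeo (N + 1)
      rw [hc2]; gcongr
    linarith [hpart (N + 1)]
  · have key : (∑ k ∈ Finset.range (N + 1), (h2T p A)^[k] H)
        - (h2T p A (∑ k ∈ Finset.range (N + 1), (h2T p A)^[k] H) + G)
        = e • I - (h2T p A)^[N + 1] H := by
      have : h2T p A (∑ k ∈ Finset.range (N + 1), (h2T p A)^[k] H)
          = ∑ k ∈ Finset.range (N + 1), (h2T p A)^[k + 1] H := by
        simp_rw [Function.iterate_succ_apply']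
        exact (map_sum (h2Tl p A) _ _)
      rw [this, Finset.sum_range_succ' (fun k => (h2T p A)^[k] H),
        Finset.sum_range_succ (fun k => (h2T p A)^[k + 1] H)]
      simp only [Function.iterate_zero, id]
      rw [hHdef]
      abel
    have key' := congrFun key χ
    simp only [Pi.sub_apply, Pi.add_apply] at key'
    rw [key']
    have hpsd := h2T_iter_nonneg hp A hH0 (N + 1)
    have b1 := h2_one_bound hpsd
    have b2 : h2ip I ((h2T p A)^[N + 1] H) ≤ (g + e) * (c1 * lam ^ (N + 1)) := by
      have hHI : H ≤ (g + e) • I := by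
        rw [add_smul]
        exact add_le_add (h2_one_bound hG) le_rfl
      have := h2ip_mono h0 ((h2T_mono hp A).iterate (N + 1) hHI)
      rw [h2T_iter_eq p A ((g + e) • I), map_smul, ← h2T_iter_eq, h2ip_smul] at this
      refine this.trans ?_
      have := hc1b (N + 1)
      gcongr
    set v := h2ip I ((h2T p A)^[N + 1] H) with hv
    have b3 : ((e • I) χ - (h2T p A)^[N + 1] H χ)
        = (e - v) • (1 : Matrix (Fin n) (Fin n) ℝ) + (v • I - (h2T p A)^[N + 1] H) χ := by
      simp only [Pi.sub_apply, Pi.smul_apply, sub_smul, hI]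
      abel
    rw [b3]
    refine PosDef.add_posSemidef (PosDef.one.smul (by linarith)) ?_
    exact b1 χ

end PartOne
section PartTwo
open scoped MatrixOrder

lemma h2_step {Ω : Type} [MeasurableSpace Ω] (μ : Measure Ω) [IsProbabilityMeasure μ]
    {S : Type} [Fintype S] [MeasurableSpace S] [MeasurableSingletonClass S]
    (θ : ℕ → Ω → S) (hθ : ∀ k, Measurable (θ k)) (p : S → S → ℝ) (hp : ∀ a b, 0 ≤ p a b)
    (hm : IsMarkovChain μ θ p) (k : ℕ) (F : (Fin (k + 1) → S) → S → ENNReal) :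
    ∫⁻ ω, F (fun l => θ l ω) (θ (k + 1) ω) ∂μ
      = ∫⁻ ω, ∑ j, ENNReal.ofReal (p (θ k ω) j) * F (fun l => θ l ω) j ∂μ := by
  have hH : Measurable (fun ω => (fun l : Fin (k + 1) => θ l ω)) :=
    measurable_pi_lambda _ fun l => hθ l
  have hH2 : Measurable (fun ω => ((fun l : Fin (k + 1) => θ l ω), θ (k + 1) ω)) :=
    hH.prodMk (hθ _)
  have e1 : ∫⁻ ω, F (fun l => θ l ω) (θ (k + 1) ω) ∂μ
      = ∑ h : Fin (k + 1) → S, ∑ j : S, F h j *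
        μ {ω | (fun l : Fin (k + 1) => θ l ω) = h ∧ θ (k + 1) ω = j} := by
    have := lintegral_map (μ := μ) (f := fun z : (Fin (k + 1) → S) × S => F z.1 z.2)
      (Measurable.of_discrete) hH2
    rw [← this, lintegral_fintype, Fintype.sum_prod_type]
    refine Finset.sum_congr rfl fun h _ => Finset.sum_congr rfl fun j _ => ?_
    rw [Measure.map_apply hH2 (measurableSet_singleton _)]
    congr 2
    ext ω
    simp [Prod.ext_iff]
  have e2 : ∫⁻ ω, ∑ j, ENNReal.ofReal (p (θ k ω) j) * F (fun l => θ l ω) j ∂μ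
      = ∑ h : Fin (k + 1) → S, (∑ j : S, ENNReal.ofReal (p (h (Fin.last k)) j) * F h j) *
        μ {ω | (fun l : Fin (k + 1) => θ l ω) = h} := by
    have := lintegral_map (μ := μ) (f := fun h : (Fin (k + 1) → S) =>
      ∑ j : S, ENNReal.ofReal (p (h (Fin.last k)) j) * F h j)
      (Measurable.of_discrete) hH
    simp only [Fin.val_last] at this
    rw [← this, lintegral_fintype]
    refine Finset.sum_congr rfl fun h _ => ?_
    rw [Measure.map_apply hH (measurableSet_singleton _)]
    rfl
  rw [e1, e2]
  refine Finset.sum_congr rfl fun h _ => ?_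
  rw [Finset.sum_mul]
  refine Finset.sum_congr rfl fun j _ => ?_
  have hmk := hm k j (fun l => if hl : l < k + 1 then h ⟨l, hl⟩ else h (Fin.last k))
  have s1 : {ω | ∀ l ≤ k, θ l ω = if hl : l < k + 1 then h ⟨l, hl⟩ else h (Fin.last k)}
      = {ω | (fun l : Fin (k + 1) => θ l ω) = h} := by
    ext ω
    simp only [Set.mem_ofPred_eq, funext_iff]
    constructor
    · intro H l
      have := H l (Nat.lt_succ_iff.mp l.2)
      rw [this, dif_pos l.2]
    · intro H l hl
      rw [dif_pos (Nat.lt_succ_of_le hl)]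
      exact H ⟨l, Nat.lt_succ_of_le hl⟩
  have s2 : {ω | θ (k + 1) ω = j ∧
        ∀ l ≤ k, θ l ω = if hl : l < k + 1 then h ⟨l, hl⟩ else h (Fin.last k)}
      = {ω | (fun l : Fin (k + 1) => θ l ω) = h ∧ θ (k + 1) ω = j} := by
    ext ω
    have : (∀ l ≤ k, θ l ω = if hl : l < k + 1 then h ⟨l, hl⟩ else h (Fin.last k))
        ↔ (fun l : Fin (k + 1) => θ l ω) = h := Set.ext_iff.mp s1 ω
    simp only [Set.mem_ofPred_eq]
    rw [this, and_comm]
  rw [s1, s2] at hmk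
  have hmk' : μ {ω | (fun l : Fin (k + 1) => θ l ω) = h ∧ θ (k + 1) ω = j}
      = ENNReal.ofReal (p (h (Fin.last k)) j) * μ {ω | (fun l : Fin (k + 1) => θ l ω) = h} := by
    rw [← ENNReal.ofReal_toReal (measure_ne_top μ {ω | (fun l : Fin (k + 1) => θ l ω) = h ∧ θ (k + 1) ω = j}),
      hmk, ENNReal.ofReal_mul (by simpa using hp _ _), ENNReal.ofReal_toReal (measure_ne_top _ _)]
    congr 3
    simp [Fin.last]
  rw [hmk']
  ring

lemma h2_traj_congr {Ω Ω' S : Type} {n q : ℕ}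
    (Amat : S → Matrix (Fin n) (Fin n) ℝ) (Emat : S → Matrix (Fin n) (Fin q) ℝ)
    (mode : ℕ → Ω → S) (mode' : ℕ → Ω' → S) (u : ℕ → Fin q → ℝ) (x0 : Fin n → ℝ)
    (ω : Ω) (ω' : Ω') (k : ℕ) (h : ∀ l < k, mode l ω = mode' l ω') :
    traj Amat Emat mode (fun k _ => u k) x0 k ω = traj Amat Emat mode' (fun k _ => u k) x0 k ω' := by
  induction k with
  | zero => rfl
  | succ k ih =>
    simp only [traj]
    rw [ih fun l hl => h l (by omega), h k (by omega)]

lemma h2_qstep {Ω : Type} [MeasurableSpace Ω] (μ : Measure Ω) [IsProbabilityMeasure μ]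
    {S : Type} [Fintype S] [MeasurableSpace S] [MeasurableSingletonClass S]
    (θ : ℕ → Ω → S) (hθ : ∀ k, Measurable (θ k)) (p : S → S → ℝ) (hp : ∀ a b, 0 ≤ p a b)
    (hm : IsMarkovChain μ θ p) {n q : ℕ}
    (A : S → Matrix (Fin n) (Fin n) ℝ) (E : S → Matrix (Fin n) (Fin q) ℝ)
    (u : ℕ → Fin q → ℝ) (x0 : Fin n → ℝ) (k : ℕ)
    (M : S → Matrix (Fin n) (Fin n) ℝ) (hM : 0 ≤ M) :
    ∫⁻ ω, ENNReal.ofReal (traj A E θ (fun k _ => u k) x0 (k + 1) ω ⬝ᵥ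
        (M (θ (k + 1) ω) *ᵥ traj A E θ (fun k _ => u k) x0 (k + 1) ω)) ∂μ
      = ∫⁻ ω, ENNReal.ofReal (
        (A (θ k ω) *ᵥ traj A E θ (fun k _ => u k) x0 k ω + E (θ k ω) *ᵥ u k) ⬝ᵥ
        ((∑ j, p (θ k ω) j • M j) *ᵥ
          (A (θ k ω) *ᵥ traj A E θ (fun k _ => u k) x0 k ω + E (θ k ω) *ᵥ u k))) ∂μ := by
  set X : (Fin (k + 1) → S) → Fin n → ℝ := fun h =>
    traj A E (fun l (h : Fin (k + 1) → S) => if hl : l < k + 1 then h ⟨l, hl⟩ else h (Fin.last k))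
      (fun k _ => u k) x0 (k + 1) h with hX
  have hXeq : ∀ ω, traj A E θ (fun k _ => u k) x0 (k + 1) ω = X (fun l => θ l ω) := by
    intro ω
    rw [hX]
    apply h2_traj_congr
    intro l hl
    rw [dif_pos hl]
  have hy : ∀ ω, A (θ k ω) *ᵥ traj A E θ (fun k _ => u k) x0 k ω + E (θ k ω) *ᵥ u k
      = X (fun l => θ l ω) := fun ω => by rw [← hXeq]; rfl
  simp only [hXeq, hy]
  rw [h2_step μ θ hθ p hp hm k (fun h j => ENNReal.ofReal (X h ⬝ᵥ (M j *ᵥ X h)))]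
  refine lintegral_congr fun ω => ?_
  have hnn : ∀ j (x : Fin n → ℝ), 0 ≤ x ⬝ᵥ (M j *ᵥ x) := fun j x =>
    (h2_psd_iff.mp (nonneg_iff_posSemidef.mp (hM j))).2 x
  simp only [← ENNReal.ofReal_mul (hp _ _)]
  rw [← ENNReal.ofReal_sum_of_nonneg fun j _ => mul_nonneg (hp _ _) (hnn _ _)]
  congr 1
  rw [sum_mulVec, dotProduct_sum]
  refine Finset.sum_congr rfl fun j _ => ?_
  rw [smul_mulVec, dotProduct_smul, smul_eq_mul]

lemma h2L_nonneg {S : Type} [Fintype S] {n : ℕ} {p : S → S → ℝ} (hp : ∀ a b, 0 ≤ p a b)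
    (A : S → Matrix (Fin n) (Fin n) ℝ) {M : S → Matrix (Fin n) (Fin n) ℝ} (hM : 0 ≤ M) :
    0 ≤ h2L p A M := by
  intro χ
  have h1 : (0 : Matrix (Fin n) (Fin n) ℝ) ≤ ∑ χ', p χ χ' • M χ' :=
    Finset.sum_nonneg fun j _ => ((nonneg_iff_posSemidef.mp (hM j)).smul (hp _ _)).nonneg
  have := h2_conj_mono (A χ)ᵀ h1
  simpa [h2L] using this

lemma h2_qiter {Ω : Type} [MeasurableSpace Ω] (μ : Measure Ω) [IsProbabilityMeasure μ]
    {S : Type} [Fintype S] [MeasurableSpace S] [MeasurableSingletonClass S]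
    (θ : ℕ → Ω → S) (hθ : ∀ k, Measurable (θ k)) (p : S → S → ℝ) (hp : ∀ a b, 0 ≤ p a b)
    (hm : IsMarkovChain μ θ p) {n q : ℕ}
    (A : S → Matrix (Fin n) (Fin n) ℝ) (E : S → Matrix (Fin n) (Fin q) ℝ)
    (u : ℕ → Fin q → ℝ) (x0 : Fin n → ℝ) (a : ℕ) (hu : ∀ k, a ≤ k → u k = 0) (k : ℕ)
    (M : S → Matrix (Fin n) (Fin n) ℝ) (hM : 0 ≤ M) :
    ∫⁻ ω, ENNReal.ofReal (traj A E θ (fun k _ => u k) x0 (a + k) ω ⬝ᵥ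
        (M (θ (a + k) ω) *ᵥ traj A E θ (fun k _ => u k) x0 (a + k) ω)) ∂μ
      = ∫⁻ ω, ENNReal.ofReal (traj A E θ (fun k _ => u k) x0 a ω ⬝ᵥ
        (((h2L p A)^[k] M) (θ a ω) *ᵥ traj A E θ (fun k _ => u k) x0 a ω)) ∂μ := by
  induction k generalizing M with
  | zero => rfl
  | succ k ih =>
    rw [Function.iterate_succ_apply, ← ih _ (h2L_nonneg hp A hM), ← Nat.add_assoc,
      h2_qstep μ θ hθ p hp hm A E u x0 (a + k) M hM]
    refine lintegral_congr fun ω => ?_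
    rw [hu (a + k) (by omega), mulVec_zero, add_zero]
    congr 1
    unfold h2L
    rw [← mulVec_mulVec, ← mulVec_mulVec, dotProduct_mulVec _ (A (θ (a + k) ω))ᵀ,
      vecMul_transpose]

lemma h2_mss_value {Ω : Type} [MeasurableSpace Ω] (μ : Measure Ω) [IsProbabilityMeasure μ]
    {S : Type} [Fintype S] [MeasurableSpace S] [MeasurableSingletonClass S]
    (θ : ℕ → Ω → S) (hθ : ∀ k, Measurable (θ k)) (p : S → S → ℝ) (hp : ∀ a b, 0 ≤ p a b)
    (hm : IsMarkovChain μ θ p) {n q : ℕ}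
    (A : S → Matrix (Fin n) (Fin n) ℝ) (E : S → Matrix (Fin n) (Fin q) ℝ)
    (x0 : Fin n → ℝ) (k : ℕ) (χ : S) (h0 : ∀ᵐ ω ∂μ, θ 0 ω = χ) :
    ∫⁻ ω, sqE (traj A E θ (fun _ _ => 0) x0 k ω) ∂μ
      = ENNReal.ofReal (x0 ⬝ᵥ (((h2L p A)^[k] (fun _ => 1)) χ *ᵥ x0)) := by
  have := h2_qiter μ θ hθ p hp hm A E (fun _ => 0) x0 0 (fun _ _ => rfl) k (fun _ => 1)
    (fun _ => PosSemidef.one.nonneg)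
  simp only [zero_add, one_mulVec] at this
  have e : ∀ v : Fin n → ℝ, sqE v = ENNReal.ofReal (v ⬝ᵥ v) := fun v => by
    simp [sqE, dotProduct, sq]
  simp only [e]
  rw [this]
  simp only [traj]
  rw [lintegral_congr_ae (g := fun _ => ENNReal.ofReal (x0 ⬝ᵥ (((h2L p A)^[k] (fun _ => 1)) χ *ᵥ x0)))]
  · simp
  · filter_upwards [h0] with ω hω
    rw [hω]

lemma h2_imp_value {Ω : Type} [MeasurableSpace Ω] (μ : Measure Ω) [IsProbabilityMeasure μ]
    {S : Type} [Fintype S] [MeasurableSpace S] [MeasurableSingletonClass S]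
    (θ : ℕ → Ω → S) (hθ : ∀ k, Measurable (θ k)) (p : S → S → ℝ) (hp : ∀ a b, 0 ≤ p a b)
    (hm : IsMarkovChain μ θ p) {n q ℓ : ℕ}
    (A : S → Matrix (Fin n) (Fin n) ℝ) (E : S → Matrix (Fin n) (Fin q) ℝ)
    (C : S → Matrix (Fin ℓ) (Fin n) ℝ)
    (i : Fin q) (χ : S) (h0 : ∀ᵐ ω ∂μ, θ 0 ω = χ) :
    ∑' k, ∫⁻ ω, sqE (C (θ k ω) *ᵥ traj A E θ (impulse q i) 0 k ω) ∂μ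
      = ∑' k, ENNReal.ofReal ((E χ *ᵥ Pi.single i 1) ⬝ᵥ
        ((∑ j, p χ j • ((h2L p A)^[k] (fun χ => (C χ)ᵀ * C χ)) j) *ᵥ (E χ *ᵥ Pi.single i 1))) := by
  have hW : (0 : S → Matrix (Fin n) (Fin n) ℝ) ≤ (fun χ => (C χ)ᵀ * C χ) := fun χ => by
    have := (posSemidef_conjTranspose_mul_self (C χ)).nonneg
    rwa [conjTranspose_eq_transpose_of_trivial] at this
  set u : ℕ → Fin q → ℝ := fun k j => if k = 0 ∧ j = i then 1 else 0 with hu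
  have himp : (impulse q i : ℕ → Ω → Fin q → ℝ) = fun k _ => u k := rfl
  have hu0 : u 0 = Pi.single i 1 := by
    ext j
    simp [hu, Pi.single_apply]
  have hu1 : ∀ k, 1 ≤ k → u k = 0 := by
    intro k hk
    ext j
    simp only [hu, Pi.zero_apply]
    rw [if_neg (by omega)]
  have e : ∀ (χ : S) (v : Fin n → ℝ),
      sqE (C χ *ᵥ v) = ENNReal.ofReal (v ⬝ᵥ (((C χ)ᵀ * C χ) *ᵥ v)) := fun χ v => by
    rw [← mulVec_mulVec, dotProduct_mulVec, vecMul_transpose]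
    simp [sqE, dotProduct, sq]
  rw [himp]
  simp only [e]
  rw [tsum_eq_zero_add' ENNReal.summable]
  have z : ∫⁻ ω, ENNReal.ofReal (traj A E θ (fun k _ => u k) 0 0 ω ⬝ᵥ
      (((C (θ 0 ω))ᵀ * C (θ 0 ω)) *ᵥ traj A E θ (fun k _ => u k) 0 0 ω)) ∂μ = 0 := by
    simp [traj]
  rw [z, zero_add]
  refine tsum_congr fun k => ?_
  have h1 := h2_qiter μ θ hθ p hp hm A E u 0 1 hu1 k _ hW
  rw [add_comm 1 k] at h1
  rw [h1]
  have hWk : ∀ k, 0 ≤ (h2L p A)^[k] (fun χ => (C χ)ᵀ * C χ) := by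
    intro k
    induction k with
    | zero => exact hW
    | succ k ih => rw [Function.iterate_succ_apply']; exact h2L_nonneg hp A ih
  rw [h2_qstep μ θ hθ p hp hm A E u 0 0 _ (hWk k)]
  simp only [traj, mulVec_zero, zero_add, hu0]
  rw [lintegral_congr_ae (g := fun _ => ENNReal.ofReal ((E χ *ᵥ Pi.single i 1) ⬝ᵥ
        ((∑ j, p χ j • ((h2L p A)^[k] (fun χ => (C χ)ᵀ * C χ)) j) *ᵥ (E χ *ᵥ Pi.single i 1))))]
  · simp
  · filter_upwards [h0] with ω hω
    rw [hω]

end PartTwo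
section PartThree

lemma h2_intToFin_succ (T : ℕ) [NeZero T] (a : ℤ) : intToFin T (a + 1) = intToFin T a + 1 := by
  have hT : (T : ℤ) ≠ 0 := by exact_mod_cast NeZero.ne T
  apply Fin.ext
  rw [Fin.val_add, Fin.val_one']
  simp only [intToFin]
  have h1 := Int.emod_nonneg a hT
  have h2 := Int.emod_nonneg (a + 1) hT
  zify
  rw [Int.toNat_of_nonneg h1, Int.toNat_of_nonneg h2, ← Int.add_emod]

lemma h2_intToFin_zero (T : ℕ) [NeZero T] : intToFin T 0 = 0 := by
  apply Fin.ext
  simp [intToFin]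

lemma h2_intToFin_val (T : ℕ) [NeZero T] (d : Fin T) : intToFin T (d : ℤ) = d := by
  apply Fin.ext
  simp only [intToFin]
  have := d.2
  rw [Int.emod_eq_of_lt (by omega) (by omega)]
  simp

/-- One-step update map of the extended process. -/
def h2Phi {NN MM T : ℕ} [NeZero T] (f : Fin MM → Bool) (χ : XT NN MM T) (a : Fin NN)
    (b : Fin MM) : XT NN MM T :=
  (a, b, if f b = true then a else χ.2.2.1, if f b = true then 0 else χ.2.2.2 + 1)

variable {Ω : Type} {NN MM T : ℕ} [NeZero T]

lemma h2_rbar_zero (r : ℕ → Ω → Fin NN) (s : ℕ → Ω → Fin MM) (f : Fin MM → Bool) (τ₀ : ℤ)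
    (σ₀ : Fin NN) (ω : Ω) : rbarProc (T := T) r s f τ₀ σ₀ 0 ω
      = (r 0 ω, s 0 ω, if f (s 0 ω) = true then r 0 ω else σ₀,
          if f (s 0 ω) = true then 0 else intToFin T (-τ₀)) := by
  by_cases h : f (s 0 ω) = true
  · simp [rbarProc, sigmaProc, rhoProc, tauZ, h, h2_intToFin_zero]
  · simp [rbarProc, sigmaProc, rhoProc, tauZ, h]

lemma h2_rbar_succ (r : ℕ → Ω → Fin NN) (s : ℕ → Ω → Fin MM) (f : Fin MM → Bool) (τ₀ : ℤ)
    (σ₀ : Fin NN) (k : ℕ) (ω : Ω) : rbarProc (T := T) r s f τ₀ σ₀ (k + 1) ω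
      = h2Phi f (rbarProc r s f τ₀ σ₀ k ω) (r (k + 1) ω) (s (k + 1) ω) := by
  by_cases h : f (s (k + 1) ω) = true
  · have hex : ∃ j ≤ k + 1, f (s j ω) = true := ⟨k + 1, le_rfl, h⟩
    simp [rbarProc, sigmaProc, rhoProc, tauZ, h2Phi, h, hex, Nat.findGreatest_succ,
      h2_intToFin_zero]
  · have hex : (∃ j ≤ k + 1, f (s j ω) = true) ↔ ∃ j ≤ k, f (s j ω) = true := by
      constructor
      · rintro ⟨j, hj, hf⟩
        refine ⟨j, ?_, hf⟩
        rcases Nat.lt_or_ge j (k + 1) with h' | h'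
        · omega
        · exact absurd (by rwa [le_antisymm hj h'] at hf) h
      · rintro ⟨j, hj, hf⟩
        exact ⟨j, by omega, hf⟩
    simp only [rbarProc, sigmaProc, rhoProc, tauZ, h2Phi, h, hex, Nat.findGreatest_succ]
    refine Prod.ext rfl (Prod.ext rfl (Prod.ext ?_ ?_))
    · simp
    · simp only [if_false, Bool.false_eq_true]
      rw [← h2_intToFin_succ]
      congr 1
      push_cast
      ring

lemma h2_rbar_inX (r : ℕ → Ω → Fin NN) (s : ℕ → Ω → Fin MM) (f : Fin MM → Bool) (τ₀ : ℤ)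
    (σ₀ : Fin NN) (k : ℕ) (ω : Ω) : inX f (rbarProc (T := T) r s f τ₀ σ₀ k ω) := by
  intro h
  cases k with
  | zero => rw [h2_rbar_zero] at *; simp_all
  | succ k => rw [h2_rbar_succ] at *; simp_all [h2Phi]

lemma h2_rbar_det (r : ℕ → Ω → Fin NN) (s : ℕ → Ω → Fin MM) (f : Fin MM → Bool) (τ₀ : ℤ)
    (σ₀ : Fin NN) (k : ℕ) (ω ω' : Ω) (h : ∀ l ≤ k, r l ω = r l ω' ∧ s l ω = s l ω') :
    rbarProc (T := T) r s f τ₀ σ₀ k ω = rbarProc r s f τ₀ σ₀ k ω' := by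
  induction k with
  | zero =>
    rw [h2_rbar_zero, h2_rbar_zero, (h 0 le_rfl).1, (h 0 le_rfl).2]
  | succ k ih =>
    rw [h2_rbar_succ, h2_rbar_succ, ih fun l hl => h l (by omega), (h (k + 1) le_rfl).1,
      (h (k + 1) le_rfl).2]

lemma h2_rbar_meas [MeasurableSpace Ω] (r : ℕ → Ω → Fin NN) (s : ℕ → Ω → Fin MM)
    (hr : ∀ k, Measurable (r k)) (hs : ∀ k, Measurable (s k)) (f : Fin MM → Bool) (τ₀ : ℤ)
    (σ₀ : Fin NN) (k : ℕ) : Measurable (rbarProc (T := T) r s f τ₀ σ₀ k) := by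
  induction k with
  | zero =>
    have : rbarProc (T := T) r s f τ₀ σ₀ 0 = (fun z : Fin NN × Fin MM =>
        ((z.1, z.2, if f z.2 = true then z.1 else σ₀,
          if f z.2 = true then 0 else intToFin T (-τ₀)) : XT NN MM T)) ∘
          fun ω => (r 0 ω, s 0 ω) := by
      ext1 ω; rw [h2_rbar_zero]; rfl
    rw [this]
    exact Measurable.of_discrete.comp ((hr 0).prodMk (hs 0))
  | succ k ih =>
    have : rbarProc (T := T) r s f τ₀ σ₀ (k + 1)
        = (fun z : XT NN MM T × Fin NN × Fin MM => h2Phi f z.1 z.2.1 z.2.2) ∘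
          fun ω => (rbarProc (T := T) r s f τ₀ σ₀ k ω, r (k + 1) ω, s (k + 1) ω) := by
      ext1 ω; rw [h2_rbar_succ]; rfl
    rw [this]
    exact Measurable.of_discrete.comp (ih.prodMk ((hr _).prodMk (hs _)))

lemma h2_rbar_markov [MeasurableSpace Ω] (μ : Measure Ω) [IsProbabilityMeasure μ]
    (P : Matrix (Fin NN) (Fin NN) ℝ) (Q : Matrix (Fin MM) (Fin MM) ℝ)
    (r : ℕ → Ω → Fin NN) (s : ℕ → Ω → Fin MM)
    (hmr : IsMarkovChain μ r fun i j => P i j) (hms : IsMarkovChain μ s fun i j => Q i j)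
    (hind : IndepFun (fun ω l => r l ω) (fun ω l => s l ω) μ)
    (f : Fin MM → Bool) (τ₀ : ℤ) (σ₀ : Fin NN) :
    IsMarkovChain μ (rbarProc (T := T) r s f τ₀ σ₀) (pbar P Q f) := by
  intro k j i
  by_cases hex : ∃ ω0, ∀ l ≤ k, rbarProc (T := T) r s f τ₀ σ₀ l ω0 = i l
  swap
  · have e1 : {ω | ∀ l ≤ k, rbarProc (T := T) r s f τ₀ σ₀ l ω = i l} = ∅ := by
      ext ω
      simp only [Set.mem_ofPred_eq, Set.mem_empty_iff_false, iff_false]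
      exact fun h => hex ⟨ω, h⟩
    have e2 : {ω | rbarProc (T := T) r s f τ₀ σ₀ (k + 1) ω = j ∧
        ∀ l ≤ k, rbarProc (T := T) r s f τ₀ σ₀ l ω = i l} = ∅ := by
      ext ω
      simp only [Set.mem_ofPred_eq, Set.mem_empty_iff_false, iff_false]
      exact fun h => hex ⟨ω, h.2⟩
    rw [e1, e2]; simp
  obtain ⟨ω0, h0⟩ := hex
  have hpath : ∀ ω, (∀ l ≤ k, rbarProc (T := T) r s f τ₀ σ₀ l ω = i l) ↔
      ((∀ l ≤ k, r l ω = (i l).1) ∧ (∀ l ≤ k, s l ω = (i l).2.1)) := by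
    intro ω
    constructor
    · intro h
      exact ⟨fun l hl => by rw [← h l hl]; rfl, fun l hl => by rw [← h l hl]; rfl⟩
    · rintro ⟨h1, h2⟩ l hl
      rw [← h0 l hl]
      apply h2_rbar_det
      intro l' hl'
      rw [h1 l' (by omega), h2 l' (by omega), ← h0 l' (by omega)]
      exact ⟨rfl, rfl⟩
  have hmeas : ∀ {m : ℕ} (k : ℕ) (c : ℕ → Fin m), MeasurableSet {g : ℕ → Fin m | ∀ l ≤ k, g l = c l} := by
    intro m k c
    have : {g : ℕ → Fin m | ∀ l ≤ k, g l = c l}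
        = ⋂ l, ⋂ (_ : l ≤ k), (fun g : ℕ → Fin m => g l) ⁻¹' {c l} := by
      ext g; simp
    rw [this]
    exact MeasurableSet.iInter fun l => MeasurableSet.iInter fun _ =>
      (measurable_pi_apply l) (measurableSet_singleton _)
  have hmeas1 : ∀ {m : ℕ} (k : ℕ) (c : ℕ → Fin m) (b : Fin m),
      MeasurableSet {g : ℕ → Fin m | g (k + 1) = b ∧ ∀ l ≤ k, g l = c l} := by
    intro m k c b
    exact ((measurable_pi_apply (k + 1)) (measurableSet_singleton b)).inter (hmeas k c)
  have hA : (μ {ω | ∀ l ≤ k, rbarProc (T := T) r s f τ₀ σ₀ l ω = i l}).toReal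
      = (μ {ω | ∀ l ≤ k, r l ω = (i l).1}).toReal * (μ {ω | ∀ l ≤ k, s l ω = (i l).2.1}).toReal := by
    simp only [hpath]
    rw [← ENNReal.toReal_mul]
    congr 1
    exact hind.measure_inter_preimage_eq_mul _ _ (hmeas k fun l => (i l).1)
      (hmeas k fun l => (i l).2.1)
  by_cases hc : (if f j.2.1 = true then j.1 = j.2.2.1 ∧ j.2.2.2 = 0
      else j.2.2.1 = (i k).2.2.1 ∧ j.2.2.2 = (i k).2.2.2 + 1)
  · have hp : pbar P Q f (i k) j = P (i k).1 j.1 * Q (i k).2.1 j.2.1 := by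
      unfold pbar
      split_ifs at hc ⊢ <;> simp
    have hset : {ω | rbarProc (T := T) r s f τ₀ σ₀ (k + 1) ω = j ∧
        ∀ l ≤ k, rbarProc (T := T) r s f τ₀ σ₀ l ω = i l}
        = {ω | (r (k + 1) ω = j.1 ∧ ∀ l ≤ k, r l ω = (i l).1) ∧
            (s (k + 1) ω = j.2.1 ∧ ∀ l ≤ k, s l ω = (i l).2.1)} := by
      ext ω
      simp only [Set.mem_ofPred_eq]
      constructor
      · rintro ⟨h1, h2⟩
        have h3 := (hpath ω).mp h2
        exact ⟨⟨by rw [← h1]; rfl, h3.1⟩, ⟨by rw [← h1]; rfl, h3.2⟩⟩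
      · rintro ⟨⟨h1, h2⟩, ⟨h3, h4⟩⟩
        have h5 := (hpath ω).mpr ⟨h2, h4⟩
        refine ⟨?_, h5⟩
        rw [h2_rbar_succ, h5 k le_rfl, h1, h3]
        unfold h2Phi
        split_ifs at hc ⊢ with hf
        · exact Prod.ext rfl (Prod.ext rfl (Prod.ext hc.1 hc.2.symm))
        · exact Prod.ext rfl (Prod.ext rfl (Prod.ext hc.1.symm hc.2.symm))
    rw [hset, hA, hp]
    have hB : (μ {ω | (r (k + 1) ω = j.1 ∧ ∀ l ≤ k, r l ω = (i l).1) ∧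
            (s (k + 1) ω = j.2.1 ∧ ∀ l ≤ k, s l ω = (i l).2.1)}).toReal
        = (μ {ω | r (k + 1) ω = j.1 ∧ ∀ l ≤ k, r l ω = (i l).1}).toReal *
          (μ {ω | s (k + 1) ω = j.2.1 ∧ ∀ l ≤ k, s l ω = (i l).2.1}).toReal := by
      rw [← ENNReal.toReal_mul]
      congr 1
      exact hind.measure_inter_preimage_eq_mul _ _ (hmeas1 k (fun l => (i l).1) j.1)
        (hmeas1 k (fun l => (i l).2.1) j.2.1)
    rw [hB, hmr k j.1 fun l => (i l).1, hms k j.2.1 fun l => (i l).2.1]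
    ring
  · have hp : pbar P Q f (i k) j = 0 := by
      unfold pbar
      split_ifs at hc ⊢ <;> simp
    have hset : {ω | rbarProc (T := T) r s f τ₀ σ₀ (k + 1) ω = j ∧
        ∀ l ≤ k, rbarProc (T := T) r s f τ₀ σ₀ l ω = i l} = ∅ := by
      ext ω
      simp only [Set.mem_ofPred_eq, Set.mem_empty_iff_false, iff_false]
      rintro ⟨h1, h2⟩
      apply hc
      rw [h2_rbar_succ, h2 k le_rfl] at h1
      rw [← h1]
      unfold h2Phi
      by_cases hf : f (s (k + 1) ω) = true <;> simp [hf]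
    rw [hset, hp]; simp

/-- The extended process of a realization, as a realization of `θ`. -/
def h2ToTheta {P : Matrix (Fin NN) (Fin NN) ℝ} {Q : Matrix (Fin MM) (Fin MM) ℝ}
    (S : MJLSReal NN MM P Q) (f : Fin MM → Bool) (τ₀ : ℤ) (σ₀ : Fin NN) :
    ThetaReal NN MM T P Q f where
  Ω := S.Ω
  inst := S.inst
  μ := S.μ
  prob := S.prob
  θ := rbarProc S.r S.s f τ₀ σ₀
  meas := @h2_rbar_meas _ _ _ _ _ S.inst S.r S.s S.meas_r S.meas_s f τ₀ σ₀
  mem := h2_rbar_inX S.r S.s f τ₀ σ₀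
  markov := @h2_rbar_markov _ _ _ _ _ S.inst S.μ S.prob P Q S.r S.s S.markov_r S.markov_s
    S.indep f τ₀ σ₀

end PartThree
section PartFour

/-- Chain driven by a sequence of maps. -/
def h2X {m : ℕ} (x0 : Fin m) : ℕ → (ℕ → Fin m → Fin m) → Fin m
  | 0, _ => x0
  | (k + 1), ω => ω k (h2X x0 k ω)

lemma h2X_meas {m : ℕ} (x0 : Fin m) (k : ℕ) : Measurable (h2X x0 k) := by
  induction k with
  | zero => exact measurable_const
  | succ k ih =>
    have : h2X x0 (k + 1) = (fun z : (Fin m → Fin m) × Fin m => z.1 z.2) ∘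
        fun ω => (ω k, h2X x0 k ω) := rfl
    rw [this]
    exact Measurable.of_discrete.comp ((measurable_pi_apply k).prodMk ih)

lemma h2_exists_chain {m : ℕ} (P : Matrix (Fin m) (Fin m) ℝ)
    (hP0 : ∀ i j, 0 ≤ P i j) (hP1 : ∀ i, ∑ j, P i j = 1) (x0 : Fin m) :
    ∃ μ : Measure (ℕ → Fin m → Fin m), IsProbabilityMeasure μ ∧
      IsMarkovChain μ (h2X x0) fun i j => P i j := by
  have hsum : ∀ a, ∑ j, ENNReal.ofReal (P a j) = 1 := fun a => by
    rw [← ENNReal.ofReal_sum_of_nonneg fun j _ => hP0 a j, hP1, ENNReal.ofReal_one]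
  let ν : Fin m → Measure (Fin m) := fun a =>
    (PMF.ofFintype (fun j => ENNReal.ofReal (P a j)) (hsum a)).toMeasure
  have hν : ∀ a b, ν a {b} = ENNReal.ofReal (P a b) := fun a b => by
    simp only [ν]
    rw [PMF.toMeasure_apply_singleton _ _ (measurableSet_singleton b)]
    rfl
  haveI : ∀ a, IsProbabilityMeasure (ν a) := fun a => by
    simp only [ν]; infer_instance
  let κ : Measure (Fin m → Fin m) := Measure.pi ν
  have hκ : ∀ a b, κ {g | g a = b} = ENNReal.ofReal (P a b) := fun a b => by
    rw [← hν]
    exact (measurePreserving_eval ν a).measure_preimage (measurableSet_singleton b).nullMeasurableSet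
  let μ : Measure (ℕ → Fin m → Fin m) := Measure.infinitePi fun _ => κ
  refine ⟨μ, inferInstance, ?_⟩
  have hpath : ∀ (k : ℕ) (i : ℕ → Fin m), i 0 = x0 →
      {ω | ∀ l ≤ k, h2X x0 l ω = i l}
        = Set.pi (Finset.range k : Set ℕ) (fun l => {g | g (i l) = i (l + 1)}) := by
    intro k i h0
    ext ω
    simp only [Set.mem_ofPred_eq, Set.mem_pi, Finset.coe_range, Set.mem_Iio]
    constructor
    · intro h l hl
      rw [← h l (by omega), ← h (l + 1) (by omega)]
      rfl
    · intro h l hl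
      induction l with
      | zero => exact h0.symm
      | succ l ih =>
        rw [h2X, ih (by omega)]
        exact h l (by omega)
  have hprob : ∀ (k : ℕ) (i : ℕ → Fin m), i 0 = x0 →
      (μ {ω | ∀ l ≤ k, h2X x0 l ω = i l}).toReal = ∏ l ∈ Finset.range k, P (i l) (i (l + 1)) := by
    intro k i h0
    rw [hpath k i h0]
    simp only [μ]
    rw [Measure.infinitePi_pi _ (fun l _ => MeasurableSet.of_discrete), ENNReal.toReal_prod]
    refine Finset.prod_congr rfl fun l _ => ?_
    rw [hκ, ENNReal.toReal_ofReal (hP0 _ _)]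
  intro k j i
  by_cases h0 : i 0 = x0
  · let i' : ℕ → Fin m := fun l => if l ≤ k then i l else j
    have hs : {ω | h2X x0 (k + 1) ω = j ∧ ∀ l ≤ k, h2X x0 l ω = i l}
        = {ω | ∀ l ≤ k + 1, h2X x0 l ω = i' l} := by
      ext ω
      simp only [Set.mem_ofPred_eq, i']
      constructor
      · rintro ⟨h1, h2⟩ l hl
        split_ifs with h
        · exact h2 l h
        · rw [← h1, show l = k + 1 by omega]
      · intro h
        refine ⟨?_, fun l hl => ?_⟩
        · simpa using h (k + 1) le_rfl
        · simpa [hl] using h l (by omega)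
    rw [hs, hprob (k + 1) i' (by simpa [i'] using h0), hprob k i h0, Finset.prod_range_succ, mul_comm]
    congr 1
    · simp [i']
    · refine Finset.prod_congr rfl fun l hl => ?_
      rw [Finset.mem_range] at hl
      simp only [i']
      rw [if_pos hl.le, if_pos (by omega)]
  · have e1 : {ω | ∀ l ≤ k, h2X x0 l ω = i l} = ∅ := by
      ext ω
      simp only [Set.mem_ofPred_eq, Set.mem_empty_iff_false, iff_false]
      exact fun h => h0 (h 0 (Nat.zero_le _)).symm
    have e2 : {ω | h2X x0 (k + 1) ω = j ∧ ∀ l ≤ k, h2X x0 l ω = i l} = ∅ := by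
      ext ω
      simp only [Set.mem_ofPred_eq, Set.mem_empty_iff_false, iff_false]
      exact fun h => h0 (h.2 0 (Nat.zero_le _)).symm
    rw [e1, e2]; simp

lemma h2_exists_real {NN MM : ℕ} (P : Matrix (Fin NN) (Fin NN) ℝ) (Qm : Matrix (Fin MM) (Fin MM) ℝ)
    (hP0 : ∀ i j, 0 ≤ P i j) (hP1 : ∀ i, ∑ j, P i j = 1)
    (hQ0 : ∀ i j, 0 ≤ Qm i j) (hQ1 : ∀ i, ∑ j, Qm i j = 1) (r₀ : Fin NN) (s₀ : Fin MM) :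
    ∃ S : MJLSReal NN MM P Qm, ∀ ω, S.r 0 ω = r₀ ∧ S.s 0 ω = s₀ := by
  obtain ⟨μ, hμ, hmμ⟩ := h2_exists_chain P hP0 hP1 r₀
  obtain ⟨ν, hν, hmν⟩ := h2_exists_chain Qm hQ0 hQ1 s₀
  have m1 : ∀ {m : ℕ} (x0 : Fin m) (k : ℕ) (i : ℕ → Fin m),
      MeasurableSet {ω | ∀ l ≤ k, h2X x0 l ω = i l} := by
    intro m x0 k i
    have : {ω | ∀ l ≤ k, h2X x0 l ω = i l}
        = ⋂ l, ⋂ (_ : l ≤ k), (h2X x0 l) ⁻¹' {i l} := by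
      ext g; simp
    rw [this]
    exact MeasurableSet.iInter fun l => MeasurableSet.iInter fun _ =>
      (h2X_meas x0 l) (measurableSet_singleton _)
  have m2 : ∀ {m : ℕ} (x0 : Fin m) (k : ℕ) (i : ℕ → Fin m) (j : Fin m),
      MeasurableSet {ω | h2X x0 (k + 1) ω = j ∧ ∀ l ≤ k, h2X x0 l ω = i l} := by
    intro m x0 k i j
    exact ((h2X_meas x0 (k + 1)) (measurableSet_singleton j)).inter (m1 x0 k i)
  refine ⟨{ Ω := (ℕ → Fin NN → Fin NN) × (ℕ → Fin MM → Fin MM)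
            inst := inferInstance
            μ := μ.prod ν
            prob := inferInstance
            r := fun k ω => h2X r₀ k ω.1
            s := fun k ω => h2X s₀ k ω.2
            meas_r := fun k => (h2X_meas r₀ k).comp measurable_fst
            meas_s := fun k => (h2X_meas s₀ k).comp measurable_snd
            markov_r := ?_
            markov_s := ?_
            indep := ?_ }, fun ω => ⟨rfl, rfl⟩⟩
  · intro k j i
    have a1 := measurePreserving_fst (μ := μ) (ν := ν) |>.measure_preimage (m1 r₀ k i).nullMeasurableSet
    have a2 := measurePreserving_fst (μ := μ) (ν := ν) |>.measure_preimage (m2 r₀ k i j).nullMeasurableSet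
    have := hmμ k j i
    rw [← a1, ← a2] at this
    exact this
  · intro k j i
    have a1 := measurePreserving_snd (μ := μ) (ν := ν) |>.measure_preimage (m1 s₀ k i).nullMeasurableSet
    have a2 := measurePreserving_snd (μ := μ) (ν := ν) |>.measure_preimage (m2 s₀ k i j).nullMeasurableSet
    have := hmν k j i
    rw [← a1, ← a2] at this
    exact this
  · exact indepFun_prod (X := fun ω l => h2X r₀ l ω) (Y := fun ω l => h2X s₀ l ω)
      (measurable_pi_lambda _ fun l => h2X_meas r₀ l) (measurable_pi_lambda _ fun l => h2X_meas s₀ l)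

lemma h2_exists_init {NN MM T : ℕ} [NeZero T] (P : Matrix (Fin NN) (Fin NN) ℝ)
    (Qm : Matrix (Fin MM) (Fin MM) ℝ)
    (hP0 : ∀ i j, 0 ≤ P i j) (hP1 : ∀ i, ∑ j, P i j = 1)
    (hQ0 : ∀ i j, 0 ≤ Qm i j) (hQ1 : ∀ i, ∑ j, Qm i j = 1) (f : Fin MM → Bool)
    (χ : XT NN MM T) :
    ∃ (S : MJLSReal NN MM P Qm) (τ₀ : ℤ) (σ₀ : Fin NN), τ₀ ≤ 0 ∧
      (∀ ω, S.r 0 ω = χ.1 ∧ S.s 0 ω = χ.2.1) ∧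
      (inX f χ → ∀ ω, rbarProc S.r S.s f τ₀ σ₀ 0 ω = χ) := by
  obtain ⟨S, hS⟩ := h2_exists_real P Qm hP0 hP1 hQ0 hQ1 χ.1 χ.2.1
  refine ⟨S, -(χ.2.2.2 : ℤ), χ.2.2.1, by omega, hS, fun hχ ω => ?_⟩
  rw [h2_rbar_zero, (hS ω).1, (hS ω).2, neg_neg, h2_intToFin_val]
  by_cases hf : f χ.2.1 = true
  · obtain ⟨h1, h2⟩ := hχ hf
    rw [if_pos hf, if_pos hf]
    exact Prod.ext rfl (Prod.ext rfl (Prod.ext h1 h2.symm))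
  · rw [if_neg hf, if_neg hf]

end PartFour
section PartFive
open scoped MatrixOrder

lemma h2_G_nonneg {S : Type} [Fintype S] {n q : ℕ} {p : S → S → ℝ} (hp : ∀ a b, 0 ≤ p a b)
    (mu : S → ℝ) (hmu : ∀ a, 0 ≤ mu a) (E : S → Matrix (Fin n) (Fin q) ℝ) :
    (0 : S → Matrix (Fin n) (Fin n) ℝ) ≤ fun a => ∑ b, p b a • (mu b • (E b * (E b)ᵀ)) := by
  intro a
  refine Finset.sum_nonneg fun b _ => ?_
  have h := posSemidef_self_mul_conjTranspose (E b)
  rw [conjTranspose_eq_transpose_of_trivial] at h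
  exact ((h.smul (hmu b)).smul (hp b a)).nonneg

lemma h2_W_nonneg {S : Type} {n ℓ : ℕ} (C : S → Matrix (Fin ℓ) (Fin n) ℝ) :
    (0 : S → Matrix (Fin n) (Fin n) ℝ) ≤ fun a => (C a)ᵀ * C a := fun χ => by
  have := (posSemidef_conjTranspose_mul_self (C χ)).nonneg
  rwa [conjTranspose_eq_transpose_of_trivial] at this

lemma h2_quad_nonneg {n : ℕ} {M : Matrix (Fin n) (Fin n) ℝ} (hM : 0 ≤ M) (x : Fin n → ℝ) :
    0 ≤ x ⬝ᵥ (M *ᵥ x) := by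
  have := (Matrix.nonneg_iff_posSemidef.mp hM).dotProduct_mulVec_nonneg x
  simpa using this

lemma h2_quad_trace {n q : ℕ} (E : Matrix (Fin n) (Fin q) ℝ) (M : Matrix (Fin n) (Fin n) ℝ) :
    ∑ i, (E *ᵥ Pi.single i 1) ⬝ᵥ (M *ᵥ (E *ᵥ Pi.single i 1)) = (M * (E * Eᵀ)).trace := by
  rw [← Matrix.mul_assoc, Matrix.trace_mul_comm, ← Matrix.mul_assoc]
  unfold Matrix.trace
  refine Finset.sum_congr rfl fun i _ => ?_
  rw [mulVec_mulVec, Matrix.mulVec_single_one, Matrix.mulVec_single_one, Matrix.mul_assoc,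
    diag_apply, Matrix.mul_apply_eq_vecMul]
  rfl

lemma h2_key {S : Type} [Fintype S] [DecidableEq S] {n q : ℕ} {p : S → S → ℝ}
    (hp : ∀ a b, 0 ≤ p a b)
    (mu : S → ℝ) (hmu : ∀ a, 0 ≤ mu a) (A : S → Matrix (Fin n) (Fin n) ℝ)
    (E : S → Matrix (Fin n) (Fin q) ℝ) (W : S → Matrix (Fin n) (Fin n) ℝ) (hW : 0 ≤ W) :
    ∑ i : Fin q, ∑ χ, ENNReal.ofReal (mu χ) * ∑' k, ENNReal.ofReal ((E χ *ᵥ Pi.single i 1) ⬝ᵥ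
        ((∑ j, p χ j • ((h2L p A)^[k] W) j) *ᵥ (E χ *ᵥ Pi.single i 1)))
      = ∑' k, ENNReal.ofReal (h2ip W ((h2T p A)^[k]
          (fun a => ∑ b, p b a • (mu b • (E b * (E b)ᵀ))))) := by
  have hL : ∀ k, 0 ≤ (h2L p A)^[k] W := by
    intro k
    induction k with
    | zero => exact hW
    | succ k ih => rw [Function.iterate_succ_apply']; exact h2L_nonneg hp A ih
  have hs : ∀ k χ, 0 ≤ ∑ j, p χ j • ((h2L p A)^[k] W) j := fun k χ =>
    Finset.sum_nonneg fun j _ =>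
      ((Matrix.nonneg_iff_posSemidef.mp (hL k j)).smul (hp χ j)).nonneg
  simp_rw [← ENNReal.tsum_mul_left]
  simp_rw [← Summable.tsum_finsetSum (fun _ _ => ENNReal.summable)]
  refine tsum_congr fun k => ?_
  simp_rw [← ENNReal.ofReal_mul (hmu _)]
  have hn : ∀ i χ, 0 ≤ mu χ * ((E χ *ᵥ Pi.single i 1) ⬝ᵥ
        ((∑ j, p χ j • ((h2L p A)^[k] W) j) *ᵥ (E χ *ᵥ Pi.single i 1))) := fun i χ =>
    mul_nonneg (hmu χ) (h2_quad_nonneg (hs k χ) _)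
  simp_rw [← ENNReal.ofReal_sum_of_nonneg (fun χ _ => hn _ χ)]
  rw [← ENNReal.ofReal_sum_of_nonneg (fun i _ => Finset.sum_nonneg fun χ _ => hn i χ)]
  congr 1
  rw [← h2_adj_iter, Finset.sum_comm]
  simp_rw [← Finset.mul_sum, h2_quad_trace]
  unfold h2ip
  simp only [Finset.mul_sum, Finset.sum_mul, Matrix.trace_sum, Matrix.mul_smul, Matrix.smul_mul,
    Matrix.trace_smul, smul_eq_mul]
  rw [Finset.sum_comm]
  refine Finset.sum_congr rfl fun a _ => Finset.sum_congr rfl fun b _ => ?_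
  ring

/-- The state space as a subtype. -/
abbrev H2XS {NN MM T : ℕ} [NeZero T] (f : Fin MM → Bool) : Type :=
  {χ : XT NN MM T // inX f χ}

section
variable {NN MM T n m q ℓ : ℕ} [NeZero T]
    {P : Matrix (Fin NN) (Fin NN) ℝ} {Qm : Matrix (Fin MM) (Fin MM) ℝ} {f : Fin MM → Bool}

/-- Transition probabilities on the subtype. -/
def h2p (P : Matrix (Fin NN) (Fin NN) ℝ) (Qm : Matrix (Fin MM) (Fin MM) ℝ) (f : Fin MM → Bool)
    (a b : H2XS (NN := NN) (MM := MM) (T := T) f) : ℝ := pbar P Qm f a.1 b.1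

lemma h2p_nonneg (hP0 : ∀ i j, 0 ≤ P i j) (hQ0 : ∀ i j, 0 ≤ Qm i j)
    (a b : H2XS (NN := NN) (MM := MM) (T := T) f) : 0 ≤ h2p P Qm f a b := by
  unfold h2p pbar
  refine mul_nonneg (mul_nonneg ?_ (hP0 _ _)) (hQ0 _ _)
  split_ifs <;> norm_num

/-- The lifted chain. -/
def h2lift (S : ThetaReal NN MM T P Qm f) (k : ℕ) (ω : S.Ω) : H2XS (NN := NN) (T := T) f :=
  ⟨S.θ k ω, S.mem k ω⟩

lemma h2lift_markov (S : ThetaReal NN MM T P Qm f) :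
    @IsMarkovChain S.Ω S.inst S.μ _ (h2lift S) (h2p P Qm f) := by
  intro k j i
  have := S.markov k j.1 (fun l => (i l).1)
  simpa only [h2lift, Subtype.ext_iff, h2p] using this

lemma h2lift_traj (S : ThetaReal NN MM T P Qm f) (A : XT NN MM T → Matrix (Fin n) (Fin n) ℝ)
    (E : XT NN MM T → Matrix (Fin n) (Fin q) ℝ) (w : ℕ → S.Ω → Fin q → ℝ) (x0 : Fin n → ℝ)
    (k : ℕ) (ω : S.Ω) :
    traj A E S.θ w x0 k ω = traj (fun a : H2XS f => A a.1) (fun a => E a.1) (h2lift S) w x0 k ω := by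
  induction k with
  | zero => rfl
  | succ k ih => simp only [traj, ih]; rfl

open Classical in
lemma h2_theta_mss (hP0 : ∀ i j, 0 ≤ P i j) (hQ0 : ∀ i j, 0 ≤ Qm i j)
    (S : ThetaReal NN MM T P Qm f) (A : XT NN MM T → Matrix (Fin n) (Fin n) ℝ)
    (E : XT NN MM T → Matrix (Fin n) (Fin q) ℝ) (x0 : Fin n → ℝ) (k : ℕ)
    (χ : H2XS (NN := NN) (T := T) f) (h0 : ∀ᵐ ω ∂S.μ, S.θ 0 ω = χ.1) :
    ∫⁻ ω, sqE (traj A E S.θ (fun _ _ => 0) x0 k ω) ∂S.μ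
      = ENNReal.ofReal (x0 ⬝ᵥ (((h2L (h2p P Qm f) (fun a : H2XS f => A a.1))^[k] (fun _ => 1)) χ
          *ᵥ x0)) := by
  letI := S.inst
  haveI := S.prob
  have := h2_mss_value S.μ (h2lift S) (fun k => (S.meas k).subtype_mk) (h2p P Qm f)
    (h2p_nonneg hP0 hQ0) (h2lift_markov S) (fun a => A a.1) (fun a => E a.1) x0 k χ
    (by filter_upwards [h0] with ω hω; exact Subtype.ext hω)
  rw [← this]
  simp only [h2lift_traj]

open Classical in
lemma h2_theta_imp (hP0 : ∀ i j, 0 ≤ P i j) (hQ0 : ∀ i j, 0 ≤ Qm i j)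
    (S : ThetaReal NN MM T P Qm f) (A : XT NN MM T → Matrix (Fin n) (Fin n) ℝ)
    (E : XT NN MM T → Matrix (Fin n) (Fin q) ℝ) (C : XT NN MM T → Matrix (Fin ℓ) (Fin n) ℝ)
    (i : Fin q)
    (χ : H2XS (NN := NN) (T := T) f) (h0 : ∀ᵐ ω ∂S.μ, S.θ 0 ω = χ.1) :
    ∑' k, ∫⁻ ω, sqE (C (S.θ k ω) *ᵥ traj A E S.θ (impulse q i) 0 k ω) ∂S.μ
      = ∑' k, ENNReal.ofReal ((E χ.1 *ᵥ Pi.single i 1) ⬝ᵥ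
        ((∑ j, h2p P Qm f χ j • ((h2L (h2p P Qm f) (fun a : H2XS f => A a.1))^[k]
          (fun χ : H2XS f => (C χ.1)ᵀ * C χ.1)) j) *ᵥ (E χ.1 *ᵥ Pi.single i 1))) := by
  letI := S.inst
  haveI := S.prob
  have := h2_imp_value S.μ (h2lift S) (fun k => (S.meas k).subtype_mk) (h2p P Qm f)
    (h2p_nonneg hP0 hQ0) (h2lift_markov S) (fun a => A a.1) (fun a => E a.1) (fun a => C a.1) i χ
    (by filter_upwards [h0] with ω hω; exact Subtype.ext hω)
  rw [← this]
  simp only [h2lift_traj]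
  rfl

open Classical in
lemma h2_ite_sum {M : Type*} [AddCommMonoid M] (g : XT NN MM T → M) :
    (∑ χ : XT NN MM T, if inX f χ then g χ else 0) = ∑ χ : H2XS (NN := NN) (T := T) f, g χ.1 := by
  rw [← Finset.sum_filter]
  exact Finset.sum_subtype _ (by simp) _

open Classical in
lemma h2_bar_value (hP0 : ∀ i j, 0 ≤ P i j) (hQ0 : ∀ i j, 0 ≤ Qm i j)
    (A : Fin NN → Matrix (Fin n) (Fin n) ℝ) (B : Fin NN → Matrix (Fin n) (Fin m) ℝ)
    (C : Fin NN → Matrix (Fin ℓ) (Fin n) ℝ) (D : Fin NN → Matrix (Fin ℓ) (Fin m) ℝ)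
    (E : Fin NN → Matrix (Fin n) (Fin q) ℝ)
    (K : Fin NN → Fin T → Matrix (Fin m) (Fin n) ℝ)
    (μbar : XT NN MM T → ℝ) (hμ0 : ∀ χ, 0 ≤ μbar χ)
    (S : Fin q → XT NN MM T → ThetaReal NN MM T P Qm f)
    (hS : ∀ i χ, inX f χ → (∀ᵐ ω ∂(S i χ).μ, (S i χ).θ 0 ω = χ)) :
    (∑ i : Fin q, ∑ χ : XT NN MM T,
        if inX f χ
        then ENNReal.ofReal (μbar χ) * H2TermBar (S i χ) A B C D E K i
        else 0)
      = ∑' k, ENNReal.ofReal (h2ip (fun a : H2XS f => (CKmat C D K a.1)ᵀ * CKmat C D K a.1)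
          ((h2T (h2p P Qm f) (fun a : H2XS f => AKmat A B K a.1))^[k]
          (fun a => ∑ b, h2p P Qm f b a • (μbar b.1 • (E b.1.1 * (E b.1.1)ᵀ))))) := by
  rw [← h2_key (h2p_nonneg hP0 hQ0) (fun a : H2XS f => μbar a.1) (fun a => hμ0 _)
    (fun a : H2XS f => AKmat A B K a.1) (fun a => E a.1.1) _ (h2_W_nonneg _)]
  refine Finset.sum_congr rfl fun i _ => ?_
  rw [h2_ite_sum]
  refine Finset.sum_congr rfl fun χ _ => ?_
  congr 1
  exact h2_theta_imp hP0 hQ0 (S i χ.1) (AKmat A B K) (fun χ => E χ.1) (CKmat C D K) i χ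
    (hS i χ.1 χ.2)

end
end PartFive
open Classical in
/-- equivalence of (i) `Σ_K` MSS with `‖Σ_K‖₂² < γ`, (ii) `Σ̄_K` MSS
with `‖Σ̄_K‖₂² < γ`, and (iii) existence of positive definite `Q_χ` with
`∑_χ tr(C_{K,χ} Q_χ C_{K,χ}ᵀ) < γ` and `Q_χ - D̄_χ(A_K Q A_Kᵀ + μ̄ E_K E_Kᵀ) > 0`. -/
theorem h2_characterization
    {NN MM T n m q ℓ : ℕ} [NeZero NN] [NeZero MM] [NeZero T]
    [NeZero n] [NeZero m] [NeZero q] [NeZero ℓ]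
    (P : Matrix (Fin NN) (Fin NN) ℝ) (Qm : Matrix (Fin MM) (Fin MM) ℝ)
    (hP0 : ∀ i j, 0 ≤ P i j) (hP1 : ∀ i, ∑ j, P i j = 1)
    (hQ0 : ∀ i j, 0 ≤ Qm i j) (hQ1 : ∀ i, ∑ j, Qm i j = 1)
    (f : Fin MM → Bool)
    (A : Fin NN → Matrix (Fin n) (Fin n) ℝ) (B : Fin NN → Matrix (Fin n) (Fin m) ℝ)
    (C : Fin NN → Matrix (Fin ℓ) (Fin n) ℝ) (D : Fin NN → Matrix (Fin ℓ) (Fin m) ℝ)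
    (E : Fin NN → Matrix (Fin n) (Fin q) ℝ)
    (K : Fin NN → Fin T → Matrix (Fin m) (Fin n) ℝ)
    (γ : ℝ) (hγ : 0 < γ)
    (μbar : XT NN MM T → ℝ) (hμ0 : ∀ χ, 0 ≤ μbar χ)
    (hμsupp : ∀ χ, ¬ inX f χ → μbar χ = 0)
    (hμ1 : ∑ χ : XT NN MM T, μbar χ = 1) :
    ((MeanSquareStable P Qm f A B E K ∧ H2SqLtSigma P Qm f A B C D E K μbar γ)
      ↔ (MeanSquareStableBar P Qm f A B E K ∧ H2SqLtBar P Qm f A B C D E K μbar γ))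
    ∧ ((MeanSquareStableBar P Qm f A B E K ∧ H2SqLtBar P Qm f A B C D E K μbar γ)
        ↔ ∃ Qmat : XT NN MM T → Matrix (Fin n) (Fin n) ℝ,
            (∀ χ, inX f χ → (Qmat χ).PosDef) ∧
            (∑ χ : XT NN MM T, if inX f χ
                then (CKmat C D K χ * Qmat χ * (CKmat C D K χ)ᵀ).trace else 0) < γ ∧
            ∀ χ, inX f χ →
              (Qmat χ - Dop P Qm f
                (fun χ' => AKmat A B K χ' * Qmat χ' * (AKmat A B K χ')ᵀ
                  + μbar χ' • (E χ'.1 * (E χ'.1)ᵀ)) χ).PosDef) := by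
  set A' : H2XS (NN := NN) (T := T) f → Matrix (Fin n) (Fin n) ℝ := fun a => AKmat A B K a.1 with hA'
  set W : H2XS (NN := NN) (T := T) f → Matrix (Fin n) (Fin n) ℝ :=
    fun a => (CKmat C D K a.1)ᵀ * CKmat C D K a.1 with hWdef
  set G : H2XS (NN := NN) (T := T) f → Matrix (Fin n) (Fin n) ℝ :=
    fun a => ∑ b, h2p P Qm f b a • (μbar b.1 • (E b.1.1 * (E b.1.1)ᵀ)) with hGdef
  have hp := h2p_nonneg (T := T) (f := f) hP0 hQ0
  have hinit := h2_exists_init (T := T) P Qm hP0 hP1 hQ0 hQ1 f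
  -- stability
  have bar_of_det : h2DetMSS (h2p P Qm f) A' → MeanSquareStableBar P Qm f A B E K := by
    rintro ⟨c, hc, lam, h0, h1, h⟩
    refine ⟨c, hc, lam, h0, h1, fun S χ hχ hae x0 k => ?_⟩
    rw [h2_theta_mss hP0 hQ0 S (AKmat A B K) _ x0 k ⟨χ, hχ⟩ hae]
    exact ENNReal.ofReal_le_ofReal (h ⟨χ, hχ⟩ x0 k)
  have sig_of_bar : MeanSquareStableBar P Qm f A B E K → MeanSquareStable P Qm f A B E K := by
    rintro ⟨c, hc, lam, h0, h1, h⟩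
    refine ⟨c, hc, lam, h0, h1, fun S τ₀ hτ σ₀ r₀ s₀ hae x0 k => ?_⟩
    letI := S.inst
    haveI := S.prob
    have hae' : ∀ᵐ ω ∂S.μ, rbarProc (T := T) S.r S.s f τ₀ σ₀ 0 ω
        = (r₀, s₀, if f s₀ = true then r₀ else σ₀, if f s₀ = true then 0 else intToFin T (-τ₀)) := by
      filter_upwards [hae] with ω hω
      rw [h2_rbar_zero, hω.1, hω.2]
    refine h (h2ToTheta S f τ₀ σ₀) _ ?_ hae' x0 k
    obtain ⟨ω, hω⟩ := hae'.exists
    rw [← hω]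
    exact h2_rbar_inX _ _ _ _ _ _ _
  have det_of_sig : MeanSquareStable P Qm f A B E K → h2DetMSS (h2p P Qm f) A' := by
    rintro ⟨c, hc, lam, h0, h1, h⟩
    refine ⟨c, hc, lam, h0, h1, fun χ x0 k => ?_⟩
    obtain ⟨S, τ₀, σ₀, hτ, hrs, hrb⟩ := hinit χ.1
    have h2 := h S τ₀ hτ σ₀ _ _ (Filter.Eventually.of_forall hrs) x0 k
    have h3 := h2_theta_mss hP0 hQ0 (h2ToTheta S f τ₀ σ₀) (AKmat A B K) (fun χ => E χ.1) x0 k χ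
      (Filter.Eventually.of_forall (hrb χ.2))
    have h4 := h3.symm.trans_le h2
    refine (ENNReal.ofReal_le_ofReal_iff ?_).mp h4
    exact mul_nonneg (mul_nonneg hc.le (pow_nonneg h0 k)) (Finset.sum_nonneg fun i _ => sq_nonneg _)
  -- H2 norm
  have barH_of_det : (∑' k, ENNReal.ofReal (h2ip W ((h2T (h2p P Qm f) A')^[k] G)))
      < ENNReal.ofReal γ → H2SqLtBar P Qm f A B C D E K μbar γ := by
    intro h S hS
    rw [h2_bar_value hP0 hQ0 A B C D E K μbar hμ0 S hS]
    exact h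
  have sigH_of_bar : H2SqLtBar P Qm f A B C D E K μbar γ →
      H2SqLtSigma P Qm f A B C D E K μbar γ := by
    intro h S τ σv hS
    exact h (fun i χ => h2ToTheta (S i χ) f (τ i χ) (σv i χ)) (fun i χ hχ => (hS i χ hχ).2)
  have detH_of_sig : H2SqLtSigma P Qm f A B C D E K μbar γ →
      (∑' k, ENNReal.ofReal (h2ip W ((h2T (h2p P Qm f) A')^[k] G))) < ENNReal.ofReal γ := by
    intro h
    choose S τ σv hτ hrs hrb using hinit
    have h2 := h (fun _ χ => S χ) (fun _ χ => τ χ) (fun _ χ => σv χ)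
      (fun i χ hχ => ⟨hτ χ, Filter.Eventually.of_forall (hrb χ hχ)⟩)
    have h3 := h2_bar_value hP0 hQ0 A B C D E K μbar hμ0
      (fun _ χ => h2ToTheta (S χ) f (τ χ) (σv χ))
      (fun i χ hχ => Filter.Eventually.of_forall (hrb χ hχ))
    exact h3.symm.trans_lt h2
  have hDop : ∀ (Qmat : XT NN MM T → Matrix (Fin n) (Fin n) ℝ) (χ : H2XS (NN := NN) (T := T) f),
      Dop P Qm f (fun χ' => AKmat A B K χ' * Qmat χ' * (AKmat A B K χ')ᵀ
                  + μbar χ' • (E χ'.1 * (E χ'.1)ᵀ)) χ.1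
        = h2T (h2p P Qm f) A' (fun a => Qmat a.1) χ + G χ := by
    intro Qmat χ
    unfold Dop h2T
    rw [h2_ite_sum (f := f), hGdef, ← Finset.sum_add_distrib]
    refine Finset.sum_congr rfl fun b _ => ?_
    rw [smul_add]
    rfl
  have htr : ∀ (Qmat : XT NN MM T → Matrix (Fin n) (Fin n) ℝ),
      (∑ χ : XT NN MM T, if inX f χ
                then (CKmat C D K χ * Qmat χ * (CKmat C D K χ)ᵀ).trace else 0)
        = h2ip W (fun a => Qmat a.1) := by
    intro Qmat
    rw [h2_ite_sum (f := f)]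
    unfold h2ip
    refine Finset.sum_congr rfl fun b _ => ?_
    rw [Matrix.trace_mul_comm, ← Matrix.mul_assoc]
  have hGn := h2_G_nonneg hp (fun a : H2XS (NN := NN) (T := T) f => μbar a.1) (fun a => hμ0 _)
    (fun a => E a.1.1)
  have hWn := h2_W_nonneg (fun a : H2XS (NN := NN) (T := T) f => CKmat C D K a.1)
  refine ⟨⟨fun h => ⟨bar_of_det (det_of_sig h.1), barH_of_det (detH_of_sig h.2)⟩,
    fun h => ⟨sig_of_bar h.1, sigH_of_bar h.2⟩⟩, fun h => ?_, ?_⟩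
  · obtain ⟨Q, hQ, hQ1, hQ2⟩ := h2_lmi_of_det hp A' G W hGn hWn γ (det_of_sig (sig_of_bar h.1))
      (detH_of_sig (sigH_of_bar h.2))
    set Qmat : XT NN MM T → Matrix (Fin n) (Fin n) ℝ :=
      fun χ => if h : inX f χ then Q ⟨χ, h⟩ else 1 with hQmat
    have hext : (fun a : H2XS (NN := NN) (T := T) f => Qmat a.1) = Q := by
      funext a
      simp only [hQmat, dif_pos a.2]
    have hext' : ∀ χ (h : inX f χ), Qmat χ = Q ⟨χ, h⟩ := fun χ h => congrFun hext ⟨χ, h⟩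
    refine ⟨Qmat, fun χ hχ => ?_, ?_, fun χ hχ => ?_⟩
    · rw [hext' χ hχ]; exact hQ _
    · rw [htr, hext]; exact hQ1
    · rw [hDop Qmat ⟨χ, hχ⟩, hext, hext' χ hχ]; exact hQ2 _
  · rintro ⟨Qmat, hQ, hQ1, hQ2⟩
    rw [htr] at hQ1
    have := h2_det_of_lmi hp A' G W hGn hWn γ (fun a => Qmat a.1) hγ (fun a => hQ _ a.2) hQ1
      (fun χ => by rw [← hDop]; exact hQ2 _ χ.2)
    exact ⟨bar_of_det this.1, barH_of_det this.2⟩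

end
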